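/- For every prime p and every integer N ≥ 2, the integral 𝒵_N(ℤ_p, s) converges absolutely if and only if s ∈ Ω_N, and in this case 𝒵_N(ℤ_p, s) = p^{Σ_{1≤i<j≤N} s_{ij}} · Σ_{𝔖 ∈ ℛ_N} ∏_{λ ∈ ℬ(𝔖)} (p−1)_{deg_𝔖(λ)−1} / (p^{e_λ(s)} − 1). -/

import Mathlib

open MeasureTheory
open scoped LinearAlgebra.Projectivization

namespace LogCoulomb

noncomputable section

/-! ### The projective line over `ℚ_p`, its spherical metric and `PGL₂`-invariant measure -/

variable (p : ℕ) [Fact p.Prime]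

instance : MeasurableSpace ℚ_[p] := borel _
instance : BorelSpace ℚ_[p] := ⟨rfl⟩

/-- The projective line over `ℚ_p`. -/
abbrev P1 := ℙ ℚ_[p] (Fin 2 → ℚ_[p])

instance : TopologicalSpace (P1 p) :=
  inferInstanceAs (TopologicalSpace (Quotient _))

instance : MeasurableSpace (P1 p) := borel _
instance : BorelSpace (P1 p) := ⟨rfl⟩

/-- Spherical distance on homogeneous coordinates:
`δ((x₀,x₁),(y₀,y₁)) = |x₀y₁ - x₁y₀| / (max(|x₀|,|x₁|) ⬝ max(|y₀|,|y₁|))`. -/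
def sdelta (x y : Fin 2 → ℚ_[p]) : ℝ :=
  ‖x 0 * y 1 - x 1 * y 0‖ / (max ‖x 0‖ ‖x 1‖ * max ‖y 0‖ ‖y 1‖)

/-- The spherical metric on `ℙ¹(ℚ_p)`, defined via the canonical representatives. -/
def pdelta (ξ η : P1 p) : ℝ := sdelta p ξ.rep η.rep

open Classical in
/-- The action of a matrix on `ℙ¹(ℚ_p)`: `[x₀:x₁] ↦ [a x₀ + b x₁ : c x₀ + d x₁]`
(well-defined, and given by the first branch of the `if`, whenever `A` is invertible). -/
def mobius (A : Matrix (Fin 2) (Fin 2) ℚ_[p]) (ξ : P1 p) : P1 p :=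
  if h : A.mulVec ξ.rep ≠ 0 then Projectivization.mk ℚ_[p] (A.mulVec ξ.rep) h else ξ

/-- `ν` is invariant under the action of `GL₂(ℤ_p)` on `ℙ¹(ℚ_p)`; membership of the matrix
entries in `ℤ_p`, and invertibility of the matrix over `ℤ_p`, are phrased via the `p`-adic
norm on `ℚ_p`. -/
def IsGLInvariant (ν : Measure (P1 p)) : Prop :=
  ∀ A : Matrix (Fin 2) (Fin 2) ℚ_[p],
    (∀ i j, ‖A i j‖ ≤ 1) → ‖A.det‖ = 1 →
      ∀ M : Set (P1 p), MeasurableSet M → ν (mobius p A '' M) = ν M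

/-- The embedding `ι : ℚ_p → ℙ¹(ℚ_p)`, `x ↦ [x : 1]`. -/
def iota (x : ℚ_[p]) : P1 p :=
  Projectivization.mk ℚ_[p] ![x, 1] (by
    intro h
    have h1 := congrFun h 1
    simp at h1)

/-! ### Canonical partition functions -/

/-- The pairs `(i,j)` with `i < j`. -/
def pairs (N : ℕ) : Finset (Fin N × Fin N) := Finset.univ.filter fun q => q.1 < q.2

/-- The closed unit ball `ℤ_p = R` inside `ℚ_p`. -/
def Zball : Set ℚ_[p] := {x | ‖x‖ ≤ 1}

/-- The open unit ball `pℤ_p = P` inside `ℚ_p`. -/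
def Pball : Set ℚ_[p] := {x | ‖x‖ < 1}

/-- The one-component canonical partition function
`Z_N(X, β) = ∫_{X^N} ∏_{i<j} |x_i - x_j|^β dμ^N` (as a Bochner integral, whether or not it
converges absolutely). -/
def ZN (μ : Measure ℚ_[p]) [SigmaFinite μ] (X : Set ℚ_[p]) (N : ℕ) (β : ℂ) : ℂ :=
  ∫ x : Fin N → ℚ_[p], ∏ q ∈ pairs N, (‖x q.1 - x q.2‖ : ℂ) ^ β
    ∂(Measure.pi fun _ => μ.restrict X)

/-- The multivariate canonical partition function
`𝒵_I(X, s) = ∫_{X^I} ∏_{i<j, i,j ∈ I} |x_i - x_j|^{s_{ij}} dμ^I` for a subset `I ⊆ [N]`. -/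
def ZI (μ : Measure ℚ_[p]) [SigmaFinite μ] (X : Set ℚ_[p]) {N : ℕ} (I : Finset (Fin N))
    (s : Fin N → Fin N → ℂ) : ℂ :=
  ∫ x : I → ℚ_[p],
    ∏ q ∈ Finset.univ.filter (fun q : (↥I) × (↥I) => (q.1 : Fin N) < (q.2 : Fin N)),
      (‖x q.1 - x q.2‖ : ℂ) ^ s q.1.1 q.2.1
    ∂(Measure.pi fun _ => μ.restrict X)

/-- The multivariate canonical partition function
`𝒵_N(ℙ¹(ℚ_p), s) = ∫_{(ℙ¹(ℚ_p))^N} ∏_{i<j} δ(ξ_i,ξ_j)^{s_{ij}} dν^N`. -/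
def ZP1s (ν : Measure (P1 p)) [SigmaFinite ν] (N : ℕ) (s : Fin N → Fin N → ℂ) : ℂ :=
  ∫ x : Fin N → P1 p, ∏ q ∈ pairs N, ((pdelta p (x q.1) (x q.2) : ℝ) : ℂ) ^ s q.1 q.2
    ∂(Measure.pi fun _ => ν)

/-- The one-component canonical partition function `Z_N(ℙ¹(ℚ_p), β)`. -/
def ZP1 (ν : Measure (P1 p)) [SigmaFinite ν] (N : ℕ) (β : ℂ) : ℂ :=
  ∫ x : Fin N → P1 p, ∏ q ∈ pairs N, ((pdelta p (x q.1) (x q.2) : ℝ) : ℂ) ^ β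
    ∂(Measure.pi fun _ => ν)

/-! ### The quadratic recurrence -/

/-- The factor `ρ_{N,k}(t,β)` appearing in the quadratic recurrence; here
`N.choose 2 = N(N-1)/2`. -/
def rho (N k : ℕ) (t : ℝ) (β : ℂ) : ℂ :=
  if t = 0 then
    (((N : ℂ) + (N.choose 2 : ℂ) * β) * (1 - 2 * (k : ℂ) / (N : ℂ)) + 1) /
      (((N : ℂ) + (N.choose 2 : ℂ) * β) - 1)
  else
    Complex.sinh (((t : ℂ) / 2) * (((N : ℂ) + (N.choose 2 : ℂ) * β) * (1 - 2 * (k : ℂ) / (N : ℂ)) + 1)) /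
      Complex.sinh (((t : ℂ) / 2) * (((N : ℂ) + (N.choose 2 : ℂ) * β) - 1))

/-- The quadratic recurrence: `F 0 = F 1 = 1` and
`F N t β = ∑_{k=1}^{N-1} (k/N) ρ_{N,k}(t,β) F_{N-k}(t,β) F_k(t,β)` for `N ≥ 2`. -/
def F : ℕ → ℝ → ℂ → ℂ
  | 0, _, _ => 1
  | 1, _, _ => 1
  | N + 2, t, β =>
    ∑ k ∈ (Finset.Icc 1 (N + 1)).attach,
      (((k : ℕ) : ℂ) / ((N : ℂ) + 2)) * rho (N + 2) k t β *
        F (N + 2 - (k : ℕ)) t β * F (k : ℕ) t β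
  decreasing_by
  all_goals
    have hk := Finset.mem_Icc.mp k.2
    omega

/-! ### Splitting chains -/

/-- A splitting chain `Λ_0 > Λ_1 > ⋯ > Λ_L` of set partitions of the subset `I ⊆ [N]`,
beginning with the trivial partition `{I}` and ending with the partition of `I` into
singletons.  (The values `Λ ℓ` for `ℓ > L` are required to be `∅`, so that a chain is
determined by the genuine data `Λ_0, …, Λ_L`.) -/
structure SplChain (N : ℕ) (I : Finset (Fin N)) where
  L : ℕ
  Λ : ℕ → Finset (Finset (Fin N))
  nonempty_mem : ∀ ℓ ≤ L, ∀ B ∈ Λ ℓ, B.Nonempty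
  subset_mem : ∀ ℓ ≤ L, ∀ B ∈ Λ ℓ, B ⊆ I
  cover : ∀ ℓ ≤ L, ∀ i ∈ I, ∃! B, B ∈ Λ ℓ ∧ i ∈ B
  first : Λ 0 = {I}
  last : Λ L = I.image fun i => {i}
  refines : ∀ ℓ < L, ∀ B ∈ Λ (ℓ + 1), ∃ C ∈ Λ ℓ, B ⊆ C
  strict : ∀ ℓ < L, Λ (ℓ + 1) ≠ Λ ℓ
  trailing : ∀ ℓ, L < ℓ → Λ ℓ = ∅

variable {N : ℕ} {I : Finset (Fin N)}

/-- The branches of a splitting chain: the non-singleton parts,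
`ℬ(𝔖) = (Λ_0 ∪ ⋯ ∪ Λ_{L-1}) \ Λ_L`. -/
def SplChain.branches (S : SplChain N I) : Finset (Finset (Fin N)) :=
  ((Finset.range S.L).biUnion S.Λ) \ S.Λ S.L

/-- The depth `ℓ_𝔖(λ) = max {ℓ : λ ∈ Λ_ℓ}` of a branch. -/
def SplChain.depth (S : SplChain N I) (lam : Finset (Fin N)) : ℕ :=
  ((Finset.range (S.L + 1)).filter fun ℓ => lam ∈ S.Λ ℓ).sup id

/-- The degree `deg_𝔖(λ) = #{λ' ∈ Λ_{ℓ_𝔖(λ)+1} : λ' ⊆ λ}` of a branch. -/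
def SplChain.degree (S : SplChain N I) (lam : Finset (Fin N)) : ℕ :=
  ((S.Λ (S.depth lam + 1)).filter fun lam' => lam' ⊆ lam).card

/-- A splitting chain is reduced if every branch appears in exactly one partition of the
chain (namely the one at its depth). -/
def SplChain.Reduced (S : SplChain N I) : Prop :=
  ∀ lam ∈ S.branches, ∀ ℓ ≤ S.L, (lam ∈ S.Λ ℓ ↔ ℓ = S.depth lam)

/-- `e_λ(s) = #λ - 1 + ∑_{i<j, i,j ∈ λ} s_{ij}`. -/
def eexp (lam : Finset (Fin N)) (s : Fin N → Fin N → ℂ) : ℂ :=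
  (lam.card : ℂ) - 1 + ∑ q ∈ (pairs N).filter fun q => q.1 ∈ lam ∧ q.2 ∈ lam, s q.1 q.2

/-- Membership in `Ω_I`: `Re e_λ(s) > 0` for every `λ ⊆ I` with `#λ > 1`. -/
def InOmega (I : Finset (Fin N)) (s : Fin N → Fin N → ℂ) : Prop :=
  ∀ lam ⊆ I, 1 < lam.card → 0 < (eexp lam s).re


/-- The multivariate canonical partition function `𝒵_N(ℤ_p, s)` over `Fin N`-indexed tuples. -/
def ZNs (μ : Measure ℚ_[p]) [SigmaFinite μ] (X : Set ℚ_[p]) (N : ℕ)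
    (s : Fin N → Fin N → ℂ) : ℂ :=
  ∫ x : Fin N → ℚ_[p], ∏ q ∈ pairs N, (‖x q.1 - x q.2‖ : ℂ) ^ s q.1 q.2
    ∂(Measure.pi fun _ => μ.restrict X)

/-- The ball `p^v ℤ_p = {x : |x| ≤ p^{-v}}` in `ℚ_p`. -/
def pvball (v : ℤ) : Set ℚ_[p] := {x | ‖x‖ ≤ (p : ℝ) ^ (-v)}

/-- `G_N(q,β) = N! q^{(1/2)(N choose 2)β} F_N(log q, β)`. -/
def GN (N : ℕ) (β : ℂ) (q : ℝ) : ℂ :=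
  (N.factorial : ℂ) * (q : ℂ) ^ ((N.choose 2 : ℂ) * β / 2) * F N (Real.log q) β

/-- `H_N(q,β)`, the efficient formula for `Z_N(ℙ¹(K),β)` as a function of `q`. -/
def HN (N : ℕ) (β : ℂ) (q : ℝ) : ℂ :=
  (N.factorial : ℂ) * ∑ k ∈ Finset.range (N + 1),
    Complex.cosh (((Real.log q : ℂ) / 2) * ((N : ℂ) + (N.choose 2 : ℂ) * β) *
          (1 - 2 * (k : ℂ) / (N : ℂ))) /
        (2 * Complex.cosh ((Real.log q : ℂ) / 2)) ^ N *
      F (N - k) (Real.log q) β * F k (Real.log q) β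

end

/-!
The ball `ℤ_p` is the disjoint union of the `p` classes `a + p ℤ_p`. Particles with different
first digits `a` are at distance `1` and do not interact, while the blocks of particles that share a
first digit are independent rescaled copies of smaller systems. Writing `W I` for the contribution
of a block `I` inside `p ℤ_p`, this gives the linear equation

`W I = p ^ (-e_I) * (W I + ∑ (p - 1)_{d - 1} * ∏ W B)`,

where the sum is over the partitions of `I` into `d ≥ 2` blocks `B`. For the integral of the
absolute value it shows that `W I` is finite only if `|p ^ (-e_I)| < 1`; applied to truncated
integrals, it shows that then `W I` is indeed finite as soon as the `W B` are. Solving the equation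
for `W I` and unrolling it level by level, splitting all blocks that are not singletons at once,
enumerates the reduced splitting chains.
-/

open Finset

/-! ### Colourings and set partitions -/

section Top

variable {ι : Type*} [DecidableEq ι] {I : Finset ι}

lemma parts_top_of_nonempty (hI : I.Nonempty) : (⊤ : Finpartition I).parts = {I} :=
  (Finpartition.parts_top_subset I).antisymm <| singleton_subset_iff.2 <| by
    obtain ⟨B, hB⟩ := (⊤ : Finpartition I).parts_nonempty hI.ne_empty
    exact mem_singleton.1 (Finpartition.parts_top_subset I hB) ▸ hB

lemma ssubset_of_mem_parts {P : Finpartition I} (hP : P ≠ ⊤) {B : Finset ι} (hB : B ∈ P.parts) :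
    B ⊂ I := by
  refine (P.subset hB).ssubset_of_ne ?_
  rintro rfl
  exact hP (top_le_iff.1 fun C hC => ⟨B, hB, (⊤ : Finpartition B).le hC⟩)

/-- The sum of `∏ V B` over the partitions of `I` into at least two blocks, a partition into `d`
blocks having weight `(k - 1)_{d - 1}`: the number of ways to colour its blocks differently with `k`
colours when the colour of one block is prescribed. -/
def splitSum {R : Type*} [CommSemiring R] (k : ℕ) (V : Finset ι → R) (I : Finset ι) : R :=
  ∑ P ∈ univ.erase (⊤ : Finpartition I),
    (k - 1).descFactorial (#P.parts - 1) * ∏ B ∈ P.parts, V B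

lemma splitSum_congr {R : Type*} [CommSemiring R] {k : ℕ} {V W : Finset ι → R}
    (h : ∀ B ⊂ I, V B = W B) : splitSum k V I = splitSum k W I :=
  sum_congr rfl fun _ hP => congrArg _ <| prod_congr rfl fun _ hB =>
    h _ (ssubset_of_mem_parts (mem_erase.1 hP).1 hB)

end Top

section Colorings

variable {ι κ : Type*} [DecidableEq κ]

/-- The set of indices in `I` to which the colouring `a` assigns the colour `c`. -/
def colorClass (I : Finset ι) (a : ι → κ) (c : κ) : Finset ι := {i ∈ I | a i = c}

lemma mem_colorClass {I : Finset ι} {a : ι → κ} {c : κ} {i : ι} :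
    i ∈ colorClass I a c ↔ i ∈ I ∧ a i = c := mem_filter

lemma colorClass_subset (I : Finset ι) (a : ι → κ) (c : κ) : colorClass I a c ⊆ I :=
  filter_subset _ _

lemma pairwise_disjoint_colorClass (I : Finset ι) (a : ι → κ) :
    Pairwise fun c d => Disjoint (colorClass I a c) (colorClass I a d) := fun _ _ hcd =>
  disjoint_left.2 fun _ hc hd => hcd ((mem_colorClass.1 hc).2.symm.trans (mem_colorClass.1 hd).2)

variable [DecidableEq ι]

/-- The colouring that paints every block of `P` with the colour prescribed by `e`, and the
indices outside `I` as prescribed by `b`. -/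
def blockColoring {I : Finset ι} (P : Finpartition I) (e : P.parts ↪ κ) (b : {i // i ∉ I} → κ)
    (i : ι) : κ :=
  if h : i ∈ I then e ⟨P.part i, P.part_mem.2 h⟩ else b ⟨i, h⟩

lemma colorClass_blockColoring {I : Finset ι} {P : Finpartition I} (e : P.parts ↪ κ)
    (b : {i // i ∉ I} → κ) (B : P.parts) : colorClass I (blockColoring P e b) (e B) = B := by
  ext i
  rw [mem_colorClass]
  refine ⟨fun ⟨hi, he⟩ => ?_, fun hi => ?_⟩
  · rw [blockColoring, dif_pos hi, e.apply_eq_iff_eq] at he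
    exact he ▸ P.mem_part hi
  · have hiI := P.subset B.2 hi
    rw [blockColoring, dif_pos hiI, e.apply_eq_iff_eq]
    exact ⟨hiI, Subtype.ext (P.part_eq_of_mem B.2 hi)⟩

variable [Fintype κ]

/-- The partition of `I` into the nonempty colour classes of the colouring `a`. -/
def colorPartition (I : Finset ι) (a : ι → κ) : Finpartition I :=
  .ofErase (univ.image (colorClass I a))
    (supIndep_iff_pairwiseDisjoint.2 fun B hB C hC hBC => by
      obtain ⟨c, -, rfl⟩ := mem_image.1 hB
      obtain ⟨d, -, rfl⟩ := mem_image.1 hC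
      exact pairwise_disjoint_colorClass I a (ne_of_apply_ne _ hBC))
    (by ext i; simp [mem_sup, mem_colorClass])

lemma mem_parts_colorPartition {I : Finset ι} {a : ι → κ} {B : Finset ι} :
    B ∈ (colorPartition I a).parts ↔ B.Nonempty ∧ ∃ c, colorClass I a c = B := by
  simp [colorPartition, nonempty_iff_ne_empty]

lemma prod_colorClass {M : Type*} [CommMonoid M] (I : Finset ι) (a : ι → κ)
    {V : Finset ι → M} (hV : V ∅ = 1) :
    ∏ c, V (colorClass I a c) = ∏ B ∈ (colorPartition I a).parts, V B := by
  rw [colorPartition, Finpartition.ofErase_parts, bot_eq_empty, prod_erase _ hV,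
    prod_image_of_disjoint hV]
  exact fun c _ d _ hcd => pairwise_disjoint_colorClass I a hcd

lemma colorPartition_blockColoring {I : Finset ι} {P : Finpartition I} (e : P.parts ↪ κ)
    (b : {i // i ∉ I} → κ) : colorPartition I (blockColoring P e b) = P := by
  ext B
  rw [mem_parts_colorPartition]
  refine ⟨?_, fun hB => ⟨P.nonempty_of_mem_parts hB, _, colorClass_blockColoring e b ⟨B, hB⟩⟩⟩
  rintro ⟨⟨i, hi⟩, c, rfl⟩
  obtain ⟨hiI, hc⟩ := mem_colorClass.1 hi
  rw [blockColoring, dif_pos hiI] at hc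
  rw [← hc, colorClass_blockColoring]
  exact P.part_mem.2 hiI

lemma exists_blockColoring_eq (I : Finset ι) (a : ι → κ) :
    ∃ e b, blockColoring (colorPartition I a) e b = a := by
  have hclass (B : (colorPartition I a).parts) : ∃ c, colorClass I a c = B :=
    (mem_parts_colorPartition.1 B.2).2
  choose e he using hclass
  refine ⟨⟨e, fun B C h => Subtype.ext (by rw [← he B, ← he C, h])⟩, fun i => a i, ?_⟩
  ext i
  by_cases hi : i ∈ I
  · have hpart := he ⟨_, (colorPartition I a).part_mem.2 hi⟩
    have hi' := hpart.symm.subset ((colorPartition I a).mem_part hi)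
    rw [blockColoring, dif_pos hi]
    exact (mem_colorClass.1 hi').2.symm
  · simp [blockColoring, hi]

lemma colorClass_eq_of_colorPartition_eq_top {I : Finset ι} {a : ι → κ}
    (h : colorPartition I a = ⊤) {i : ι} (hi : i ∈ I) : colorClass I a (a i) = I := by
  have hmem : colorClass I a (a i) ∈ (colorPartition I a).parts :=
    mem_parts_colorPartition.2 ⟨⟨i, mem_colorClass.2 ⟨hi, rfl⟩⟩, a i, rfl⟩
  rw [h] at hmem
  exact mem_singleton.1 (Finpartition.parts_top_subset I hmem)

variable [Fintype ι]

lemma card_filter_colorPartition_eq {I : Finset ι} (P : Finpartition I) :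
    #{a : ι → κ | colorPartition I a = P} =
      Fintype.card κ ^ (Fintype.card ι - #I) * (Fintype.card κ).descFactorial #P.parts := by
  have hcard : Fintype.card ((P.parts ↪ κ) × ({i // i ∉ I} → κ)) =
      Fintype.card κ ^ (Fintype.card ι - #I) * (Fintype.card κ).descFactorial #P.parts := by
    rw [Fintype.card_prod, Fintype.card_embedding_eq, Fintype.card_coe, Fintype.card_fun,
      Fintype.card_subtype_compl, Fintype.card_coe, mul_comm]
  rw [← hcard, ← card_univ]
  refine (card_bij (fun x _ => blockColoring P x.1 x.2)
    (fun x _ => by simp [colorPartition_blockColoring]) ?_ ?_).symm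
  · rintro ⟨e, b⟩ - ⟨e', b'⟩ - h
    congr 1
    · ext B
      obtain ⟨i, hi⟩ := P.nonempty_of_mem_parts B.2
      simpa [blockColoring, P.subset B.2 hi, P.part_eq_of_mem B.2 hi] using congrFun h i
    · ext i
      simpa [blockColoring, i.2] using congrFun h i
  · intro a ha
    obtain rfl := (mem_filter.1 ha).2
    obtain ⟨e, b, h⟩ := exists_blockColoring_eq I a
    exact ⟨(e, b), mem_univ _, h⟩

variable {R : Type*} [CommSemiring R]

lemma sum_prod_colorClass (I : Finset ι) {V : Finset ι → R} (hV : V ∅ = 1) :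
    ∑ a : ι → κ, ∏ c, V (colorClass I a c) =
      Fintype.card κ ^ (Fintype.card ι - #I) *
        ∑ P : Finpartition I, (Fintype.card κ).descFactorial #P.parts * ∏ B ∈ P.parts, V B := by
  calc
    _ = ∑ P : Finpartition I, ∑ a : ι → κ with colorPartition I a = P, ∏ B ∈ P.parts, V B := by
      rw [← sum_fiberwise univ (colorPartition I)]
      refine sum_congr rfl fun P _ => sum_congr rfl fun a ha => ?_
      rw [prod_colorClass I a hV, (mem_filter.1 ha).2]
    _ = _ := by
      simp only [sum_const, card_filter_colorPartition_eq, nsmul_eq_mul, mul_sum, Nat.cast_mul,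
        Nat.cast_pow, mul_assoc]

lemma sum_prod_colorClass_eq_add {I : Finset ι} (hI : I.Nonempty) {V : Finset ι → R}
    (hV : V ∅ = 1) :
    ∑ a : ι → κ, ∏ c, V (colorClass I a c) =
      Fintype.card κ ^ (Fintype.card ι - #I + 1) * (V I + splitSum (Fintype.card κ) V I) := by
  have hdesc (P : Finpartition I) : (Fintype.card κ).descFactorial #P.parts =
      Fintype.card κ * (Fintype.card κ - 1).descFactorial (#P.parts - 1) := by
    obtain ⟨d, hd⟩ := Nat.exists_eq_add_one.2 (P.parts_nonempty hI.ne_empty).card_pos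
    rw [hd, Nat.add_sub_cancel]
    cases Fintype.card κ with
    | zero => rw [Nat.zero_descFactorial_succ, zero_mul]
    | succ k => rw [Nat.succ_descFactorial_succ, Nat.add_sub_cancel]
  rw [sum_prod_colorClass I hV, ← add_sum_erase univ _ (mem_univ ⊤), parts_top_of_nonempty hI,
    prod_singleton, card_singleton, Nat.descFactorial_one, splitSum, pow_succ, mul_assoc]
  simp only [hdesc, Nat.cast_mul, mul_add, mul_sum, mul_assoc]

lemma pow_mul_sum_prod_colorClass {u : R} (hu : u * Fintype.card κ = 1) {I : Finset ι}
    (hI : I.Nonempty) {V : Finset ι → R} (hV : V ∅ = 1) :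
    u ^ Fintype.card ι * ∑ a : ι → κ, ∏ c, V (colorClass I a c) =
      u ^ (#I - 1) * (V I + splitSum (Fintype.card κ) V I) := by
  have hcard : Fintype.card ι = #I - 1 + (Fintype.card ι - #I + 1) := by
    have := hI.card_pos
    have := I.card_le_univ
    omega
  conv_lhs => rw [hcard, sum_prod_colorClass_eq_add hI hV, pow_add, mul_assoc,
    ← mul_assoc (u ^ (Fintype.card ι - #I + 1)), ← mul_pow, hu, one_pow, one_mul]

end Colorings

section SplitSumNeZero

variable {ι : Type*} [DecidableEq ι] {I : Finset ι}

lemma exists_ne_top_card_parts_le_two (hI : 1 < #I) :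
    ∃ P : Finpartition I, P ≠ ⊤ ∧ #P.parts ≤ 2 := by
  obtain ⟨i, hi, j, hj, hij⟩ := one_lt_card.1 hI
  refine ⟨colorPartition I fun k => decide (k = i), fun h => ?_, ?_⟩
  · have hj' := (colorClass_eq_of_colorPartition_eq_top h hi).symm.subset hj
    simp [mem_colorClass, hij.symm] at hj'
  · exact (card_le_card (erase_subset _ _)).trans card_image_le

lemma splitSum_ne_zero {R : Type*} [CommSemiring R] [PartialOrder R] [IsOrderedAddMonoid R]
    [CanonicallyOrderedAdd R] [NoZeroDivisors R] [CharZero R] {k : ℕ} (hk : 1 < k)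
    {V : Finset ι → R} (hI : 1 < #I) (hV : ∀ B ⊂ I, V B ≠ 0) : splitSum k V I ≠ 0 := by
  obtain ⟨P, hP, hcard⟩ := exists_ne_top_card_parts_le_two hI
  have hdesc : (k - 1).descFactorial (#P.parts - 1) ≠ 0 :=
    Nat.descFactorial_eq_zero_iff_lt.not.2 (by omega)
  intro h
  exact mul_ne_zero (Nat.cast_ne_zero.2 hdesc)
    (prod_ne_zero_iff.2 fun B hB => hV B (ssubset_of_mem_parts hP hB))
    (sum_eq_zero_iff.1 h P (mem_erase.2 ⟨hP, mem_univ P⟩))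

end SplitSumNeZero

/-! ### Full splittings and the recursion over set partitions -/

section FullSplitting

variable {α : Type*} [DecidableEq α] {s : Finset α} {P Q : Finpartition s}

/-- `Q` refines `P` and subdivides every block of `P` that is not a singleton. These are the
consecutive partitions of a reduced splitting chain. -/
structure IsFullSplitting (P Q : Finpartition s) : Prop where
  le : Q ≤ P
  card_eq_one : ∀ B ∈ P.parts, B ∈ Q.parts → #B = 1

lemma parts_restrict_of_le (h : Q ≤ P) {B : Finset α} (hB : B ∈ P.parts) :
    (Q.restrict (P.le hB)).parts = {C ∈ Q.parts | C ⊆ B} := by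
  ext C
  simp only [Finpartition.restrict, mem_erase, mem_image, mem_filter, bot_eq_empty, inf_eq_inter]
  constructor
  · rintro ⟨hne, C', hC', rfl⟩
    obtain ⟨B', hB', hCB'⟩ := h hC'
    obtain ⟨i, hi⟩ := nonempty_iff_ne_empty.2 hne
    obtain ⟨hiC, hiB⟩ := mem_inter.1 hi
    obtain rfl := P.eq_of_mem_parts hB' hB (hCB' hiC) hiB
    rw [inter_eq_left.2 hCB']
    exact ⟨hC', hCB'⟩
  · rintro ⟨hC, hCB⟩
    exact ⟨Q.ne_bot hC, C, hC, inter_eq_left.2 hCB⟩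

lemma pairwiseDisjoint_filter_subset (P Q : Finpartition s) :
    (P.parts : Set (Finset α)).PairwiseDisjoint fun B => {C ∈ Q.parts | C ⊆ B} := by
  intro B hB B' hB' hne
  refine disjoint_left.2 fun C hC hC' => hne ?_
  obtain ⟨i, hi⟩ := Q.nonempty_of_mem_parts (mem_filter.1 hC).1
  exact P.eq_of_mem_parts hB hB' ((mem_filter.1 hC).2 hi) ((mem_filter.1 hC').2 hi)

lemma biUnion_filter_subset (h : Q ≤ P) :
    P.parts.biUnion (fun B => {C ∈ Q.parts | C ⊆ B}) = Q.parts := by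
  ext C
  simp only [mem_biUnion, mem_filter]
  exact ⟨fun ⟨_, _, hC, _⟩ => hC, fun hC => (h hC).imp fun B hB => ⟨hB.1, hC, hB.2⟩⟩

lemma bind_restrict (h : Q ≤ P) : (P.bind fun _ hB => Q.restrict (P.le hB)) = Q := by
  ext C
  rw [Finpartition.mem_bind]
  constructor
  · rintro ⟨B, hB, hC⟩
    rw [parts_restrict_of_le h hB] at hC
    exact (mem_filter.1 hC).1
  · intro hC
    obtain ⟨B, hB, hCB⟩ := h hC
    exact ⟨B, hB, by rw [parts_restrict_of_le h hB]; exact mem_filter.2 ⟨hC, hCB⟩⟩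

lemma bind_le (P : Finpartition s) (σ : ∀ B ∈ P.parts, Finpartition B) : P.bind σ ≤ P := by
  intro C hC
  obtain ⟨B, hB, hC⟩ := Finpartition.mem_bind.1 hC
  exact ⟨B, hB, (σ B hB).subset hC⟩

lemma restrict_bind (P : Finpartition s) (σ : ∀ B ∈ P.parts, Finpartition B) {B : Finset α}
    (hB : B ∈ P.parts) : (P.bind σ).restrict (P.le hB) = σ B hB := by
  ext C
  rw [parts_restrict_of_le (bind_le P σ) hB, mem_filter, Finpartition.mem_bind]
  refine ⟨?_, fun hC => ⟨⟨B, hB, hC⟩, (σ B hB).subset hC⟩⟩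
  rintro ⟨⟨B', hB', hC⟩, hCB⟩
  obtain ⟨i, hi⟩ := (σ B' hB').nonempty_of_mem_parts hC
  obtain rfl := P.eq_of_mem_parts hB' hB ((σ B' hB').subset hC hi) (hCB hi)
  exact hC

lemma IsFullSplitting.eq_bot (h : IsFullSplitting (⊥ : Finpartition s) Q) : Q = ⊥ :=
  le_bot_iff.1 h.le

lemma card_eq_one_of_mem_parts_bot {B : Finset α} (hB : B ∈ (⊥ : Finpartition s).parts) :
    #B = 1 := by
  obtain ⟨i, -, rfl⟩ := Finpartition.mem_bot_iff.1 hB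
  exact card_singleton i

lemma isFullSplitting_bot (P : Finpartition s) : IsFullSplitting P ⊥ where
  le := bot_le
  card_eq_one _ _ hB := card_eq_one_of_mem_parts_bot hB

lemma eq_bot_of_forall_card_eq_one (hP : ∀ B ∈ P.parts, #B = 1) : P = ⊥ := by
  refine le_bot_iff.1 fun B hB => ?_
  obtain ⟨i, rfl⟩ := card_eq_one.1 (hP B hB)
  exact ⟨{i}, Finpartition.mem_bot_iff.2 ⟨i, P.subset hB (mem_singleton_self i), rfl⟩, le_rfl⟩

lemma IsFullSplitting.card_parts_lt (h : IsFullSplitting P Q) (hP : P ≠ ⊥) :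
    #P.parts < #Q.parts := by
  obtain ⟨B, hB, hB1⟩ : ∃ B ∈ P.parts, #B ≠ 1 := by
    by_contra! hall
    exact hP (eq_bot_of_forall_card_eq_one hall)
  have hcover (B') (hB' : B' ∈ P.parts) : ({C ∈ Q.parts | C ⊆ B'}).Nonempty :=
    (Finpartition.exists_le_of_le h.le hB').imp fun C hC => mem_filter.2 hC
  rw [card_eq_sum_ones, ← biUnion_filter_subset h.le,
    card_biUnion (pairwiseDisjoint_filter_subset P Q)]
  refine sum_lt_sum (fun B' hB' => (hcover B' hB').card_pos) ⟨B, hB, ?_⟩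
  by_contra! hle
  obtain ⟨C, hC⟩ := Finset.card_eq_one.1 (hle.antisymm (hcover B hB).card_pos)
  have hsup := (Q.restrict (P.le hB)).sup_parts
  rw [parts_restrict_of_le h.le hB, hC, sup_singleton, id] at hsup
  exact hB1 (h.card_eq_one B hB (mem_filter.1 (hsup ▸ hC ▸ mem_singleton_self C)).1)

end FullSplitting

section SplittingRecursion

variable {α : Type*} [DecidableEq α] {s : Finset α} {R : Type*} [CommSemiring R]
  {f : Finset α → ℕ → R} {W : Finset α → R}

/-- `W` is `1` on singletons, and on larger sets it is determined by its values on the blocks of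
all nontrivial partitions, weighted by the factor `f B d` for splitting `B` into `d` blocks. -/
structure IsSplittingRecursion (f : Finset α → ℕ → R) (W : Finset α → R) : Prop where
  eq_one : ∀ B, #B = 1 → W B = 1
  eq_sum : ∀ B, 1 < #B →
    W B = ∑ T ∈ univ.erase (⊤ : Finpartition B), f B #T.parts * ∏ C ∈ T.parts, W C

/-- The total weight of the splits of the blocks of `P` into blocks of `Q`, where splitting `B`
into `d` blocks has weight `f B d` and singletons are not counted. -/
def splittingWeight (f : Finset α → ℕ → R) (P Q : Finpartition s) : R :=
  ∏ B ∈ P.parts with 1 < #B, f B #{C ∈ Q.parts | C ⊆ B}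

lemma IsSplittingRecursion.eq_sum_of_nonempty (hW : IsSplittingRecursion f W) {B : Finset α}
    (hB : B.Nonempty) :
    W B = ∑ T : Finpartition B with (B ∈ T.parts → #B = 1),
      (if 1 < #B then f B #T.parts else 1) * ∏ C ∈ T.parts, W C := by
  obtain h1 | h1 := (Nat.succ_le_of_lt hB.card_pos).eq_or_lt
  · obtain ⟨i, rfl⟩ := card_eq_one.1 h1.symm
    have : Unique (Finpartition ({i} : Finset α)) :=
      IsAtom.uniqueFinpartition (P := ⊤) (isAtom_singleton i)
    rw [filter_true_of_mem (by simp),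
      Fintype.sum_eq_single ⊤ fun T hT => (hT (Subsingleton.elim _ _)).elim,
      parts_top_of_nonempty hB]
    simp
  · have hfilter : ({T : Finpartition B | B ∈ T.parts → #B = 1} : Finset _) = univ.erase ⊤ := by
      ext T
      simp only [mem_filter, mem_univ, true_and, mem_erase, and_true, h1.ne', imp_false]
      refine ⟨fun hT hT' => hT ?_, fun hT hB => (ssubset_of_mem_parts hT hB).ne rfl⟩
      rw [hT', parts_top_of_nonempty hB, mem_singleton]
    rw [hfilter, hW.eq_sum B h1]
    simp only [if_pos h1]

open Classical in
lemma IsSplittingRecursion.prod_parts (hW : IsSplittingRecursion f W) (P : Finpartition s) :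
    ∏ B ∈ P.parts, W B =
      ∑ Q with IsFullSplitting P Q, splittingWeight f P Q * ∏ C ∈ Q.parts, W C := by
  rw [prod_congr rfl fun B hB => hW.eq_sum_of_nonempty (P.nonempty_of_mem_parts hB), prod_sum]
  refine sum_bij' (fun σ _ => P.bind σ) (fun Q _ B hB => Q.restrict (P.le hB)) ?_ ?_ ?_ ?_ ?_
  · intro σ hσ
    refine mem_filter.2 ⟨mem_univ _, bind_le P σ, fun B hB hBσ => ?_⟩
    refine (mem_filter.1 (mem_pi.1 hσ B hB)).2 ?_
    rw [← restrict_bind P σ hB, parts_restrict_of_le (bind_le P σ) hB]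
    exact mem_filter.2 ⟨hBσ, subset_rfl⟩
  · intro Q hQ
    have hQ := (mem_filter.1 hQ).2
    refine mem_pi.2 fun B hB => mem_filter.2 ⟨mem_univ _, fun hBQ => hQ.card_eq_one B hB ?_⟩
    rw [parts_restrict_of_le hQ.le hB] at hBQ
    exact (mem_filter.1 hBQ).1
  · exact fun σ _ => funext₂ fun B hB => restrict_bind P σ hB
  · exact fun Q hQ => bind_restrict (mem_filter.1 hQ).2.le
  · intro σ _
    have hσ (B : P.parts) : (σ B B.2).parts = {C ∈ (P.bind σ).parts | C ⊆ B.1} := by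
      rw [← parts_restrict_of_le (bind_le P σ) B.2, restrict_bind]
    simp only [hσ, prod_mul_distrib, splittingWeight]
    congr 1
    · rw [prod_filter]
      exact prod_attach P.parts
        fun B => if 1 < #B then f B #{C ∈ (P.bind σ).parts | C ⊆ B} else 1
    · rw [prod_attach P.parts fun B => ∏ C ∈ (P.bind σ).parts with C ⊆ B, W C,
        ← prod_biUnion (pairwiseDisjoint_filter_subset P _), biUnion_filter_subset (bind_le P σ)]

/-- The sequences of partitions starting at `P` in which every step is a full splitting. They are
infinite: such a sequence reaches the partition into singletons and then stays there. -/
def splittingPaths (P : Finpartition s) : Set (Stream' (Finpartition s)) :=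
  {c | c.head = P ∧ ∀ k, IsFullSplitting (c.get k) (c.get (k + 1))}

lemma splittingPaths_eq_biUnion (P : Finpartition s) :
    splittingPaths P = ⋃ Q ∈ {Q | IsFullSplitting P Q}, Stream'.cons P '' splittingPaths Q := by
  ext c
  rw [Set.mem_iUnion₂]
  constructor
  · rintro ⟨rfl, hc⟩
    exact ⟨c.get 1, hc 0, c.tail, ⟨rfl, fun k => hc (k + 1)⟩, Stream'.eta c⟩
  · rintro ⟨Q, hQ, c, ⟨rfl, hc⟩, rfl⟩
    refine ⟨rfl, fun k => ?_⟩
    cases k with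
    | zero => exact hQ
    | succ k => exact hc k

/-- The weight of the first `n` steps of a sequence of partitions. -/
def pathWeight (f : Finset α → ℕ → R) (n : ℕ) (c : Stream' (Finpartition s)) : R :=
  ∏ k ∈ range n, splittingWeight f (c.get k) (c.get (k + 1))

lemma pathWeight_cons {P Q : Finpartition s} {c : Stream' (Finpartition s)}
    (hc : c ∈ splittingPaths Q) (n : ℕ) :
    pathWeight f (n + 1) (Stream'.cons P c) = splittingWeight f P Q * pathWeight f n c := by
  obtain ⟨rfl, -⟩ := hc
  rw [pathWeight, prod_range_succ', mul_comm]
  rfl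

lemma splittingPaths_bot : splittingPaths (⊥ : Finpartition s) = {Stream'.const ⊥} := by
  ext c
  refine ⟨fun ⟨h0, hc⟩ => ?_, ?_⟩
  · ext1 k
    induction k with
    | zero => exact h0
    | succ k ih => exact (ih ▸ hc k).eq_bot
  · rintro rfl
    exact ⟨rfl, fun _ => isFullSplitting_bot ⊥⟩

lemma IsSplittingRecursion.prod_parts_bot (hW : IsSplittingRecursion f W) :
    ∏ B ∈ (⊥ : Finpartition s).parts, W B = 1 :=
  prod_eq_one fun _ hB => hW.eq_one _ (card_eq_one_of_mem_parts_bot hB)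

/-- The bound on `n` leaves enough steps to reach `⊥`, since every earlier step adds a block. -/
lemma IsSplittingRecursion.finsum_pathWeight (hW : IsSplittingRecursion f W) (n : ℕ)
    (P : Finpartition s) (hn : #s ≤ #P.parts + n) :
    (splittingPaths P).Finite ∧ ∑ᶠ c ∈ splittingPaths P, pathWeight f n c = ∏ B ∈ P.parts, W B := by
  classical
  induction n generalizing P with
  | zero =>
    obtain rfl : P = ⊥ := by
      by_contra hP
      exact ((isFullSplitting_bot P).card_parts_lt hP).not_ge (Finpartition.card_bot s ▸ hn)
    rw [splittingPaths_bot, finsum_mem_singleton, hW.prod_parts_bot, pathWeight, prod_range_zero]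
    exact ⟨Set.finite_singleton _, rfl⟩
  | succ n ih =>
    have ihQ (Q) (hQ : IsFullSplitting P Q) := ih Q <| by
      obtain rfl | hP := eq_or_ne P ⊥
      · rw [hQ.eq_bot, Finpartition.card_bot]
        exact Nat.le_add_right _ _
      · have := hQ.card_parts_lt hP
        lia
    have hfin (Q) (hQ : IsFullSplitting P Q) := (ihQ Q hQ).1.image (Stream'.cons P)
    have hdisj : {Q | IsFullSplitting P Q}.PairwiseDisjoint
        fun Q => Stream'.cons P '' splittingPaths Q := fun Q _ Q' _ hne => by
      refine Set.disjoint_left.2 ?_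
      rintro _ ⟨c, ⟨rfl, -⟩, rfl⟩ ⟨c', ⟨rfl, -⟩, h⟩
      exact hne (congrArg Stream'.head (Stream'.cons_injective_right P h)).symm
    rw [splittingPaths_eq_biUnion, finsum_mem_biUnion hdisj (Set.toFinite _) hfin, hW.prod_parts,
      ← finsum_mem_coe_finset, coe_filter_univ]
    refine ⟨(Set.toFinite _).biUnion hfin, finsum_mem_congr rfl fun Q hQ => ?_⟩
    rw [finsum_mem_image (Stream'.cons_injective_right P).injOn, ← (ihQ Q hQ).2,
      mul_finsum_mem' _ _ (ihQ Q hQ).1]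
    exact finsum_mem_congr rfl fun c hc => pathWeight_cons hc n

end SplittingRecursion

/-! ### Reduced splitting chains as paths of full splittings -/

section Paths

variable {α : Type*} [DecidableEq α] {s : Finset α} {P : Finpartition s}
  {c : Stream' (Finpartition s)}

lemma antitone_of_mem_splittingPaths (hc : c ∈ splittingPaths P) : Antitone c.get :=
  antitone_nat_of_succ_le fun k => (hc.2 k).le

lemma lt_card_parts_of_mem_splittingPaths (hc : c ∈ splittingPaths P) {k : ℕ}
    (hk : c.get k ≠ ⊥) : k < #(c.get k).parts := by
  induction k with
  | zero =>
    refine card_pos.2 (nonempty_iff_ne_empty.2 fun h => hk (eq_bot_of_forall_card_eq_one ?_))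
    simp [h]
  | succ k ih =>
    have hk' : c.get k ≠ ⊥ := fun h => hk (h ▸ hc.2 k).eq_bot
    exact (Nat.succ_le_of_lt (ih hk')).trans_lt ((hc.2 k).card_parts_lt hk')

lemma exists_get_eq_bot_of_mem_splittingPaths (hc : c ∈ splittingPaths P) :
    ∃ k, c.get k = ⊥ := by
  by_contra! h
  exact (lt_card_parts_of_mem_splittingPaths hc (h #s)).not_ge (Finpartition.card_parts_le_card _)

lemma mem_parts_of_le_of_le {P Q T : Finpartition s} (hQT : Q ≤ T) (hTP : T ≤ P) {B : Finset α}
    (hBP : B ∈ P.parts) (hBQ : B ∈ Q.parts) : B ∈ T.parts := by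
  obtain ⟨C, hC, hBC⟩ := hQT hBQ
  obtain ⟨B', hB', hCB'⟩ := hTP hC
  obtain ⟨i, hi⟩ := P.nonempty_of_mem_parts hBP
  obtain rfl := P.eq_of_mem_parts hBP hB' hi (hCB' (hBC hi))
  exact (subset_antisymm hBC hCB') ▸ hC

lemma eq_of_mem_parts_of_mem_parts (hc : ∀ k, IsFullSplitting (c.get k) (c.get (k + 1)))
    {B : Finset α} (hB : 1 < #B) {k l : ℕ} (hk : B ∈ (c.get k).parts)
    (hl : B ∈ (c.get l).parts) : k = l := by
  wlog hkl : k < l generalizing k l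
  · exact (le_of_not_gt hkl).eq_or_lt.elim Eq.symm fun h => (this hl hk h).symm
  have hanti : Antitone c.get := antitone_nat_of_succ_le fun k => (hc k).le
  exact absurd ((hc k).card_eq_one B hk
    (mem_parts_of_le_of_le (hanti hkl) (hc k).le hk hl)) hB.ne'

end Paths

namespace SplChain

variable {N : ℕ} {I : Finset (Fin N)} (S : SplChain N I)

/-- The partitions of a splitting chain, continued indefinitely by the partition into singletons. -/
def path : Stream' (Finpartition I) := fun k =>
  if hk : k ≤ S.L then
    .ofExistsUnique (S.Λ k) (S.subset_mem k hk) (S.cover k hk)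
      fun h => not_nonempty_empty (S.nonempty_mem k hk ∅ h)
  else ⊥

lemma parts_path {k : ℕ} (hk : k ≤ S.L) : (S.path.get k).parts = S.Λ k := by
  rw [Stream'.get, path, dif_pos hk]
  rfl

lemma path_of_le {k : ℕ} (hk : S.L ≤ k) : S.path.get k = ⊥ := by
  obtain rfl | hk := hk.eq_or_lt
  · ext B
    rw [S.parts_path le_rfl, S.last, mem_image, Finpartition.mem_bot_iff]
  · rw [Stream'.get, path, dif_neg hk.not_ge]

lemma head_path : S.path.head = ⊤ := by
  have hI : I.Nonempty := S.nonempty_mem 0 (Nat.zero_le _) I (S.first ▸ mem_singleton_self I)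
  refine Finpartition.ext ?_
  rw [parts_top_of_nonempty hI, ← S.first]
  exact S.parts_path (Nat.zero_le _)

lemma path_succ_le (k : ℕ) : S.path.get (k + 1) ≤ S.path.get k := by
  obtain hk | hk := le_or_gt S.L k
  · rw [S.path_of_le (hk.trans k.le_succ)]
    exact bot_le
  · intro B hB
    rw [S.parts_path hk] at hB
    rw [S.parts_path hk.le]
    exact S.refines k hk B hB

lemma path_eq_bot_iff {k : ℕ} : S.path.get k = ⊥ ↔ S.L ≤ k := by
  refine ⟨fun h => ?_, S.path_of_le⟩
  by_contra! hk
  have hsucc : S.path.get (k + 1) = S.path.get k := (S.path_succ_le k).antisymm (h ▸ bot_le)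
  refine S.strict k hk ?_
  rw [← S.parts_path hk, ← S.parts_path hk.le, hsucc]

lemma path_injective : Function.Injective (path : SplChain N I → _) := by
  intro S S' h
  have hL : S.L = S'.L := eq_of_forall_ge_iff fun k => by
    rw [← S.path_eq_bot_iff, ← S'.path_eq_bot_iff, h]
  have hΛ : S.Λ = S'.Λ := funext fun k => by
    obtain hk | hk := le_or_gt k S.L
    · rw [← S.parts_path hk, ← S'.parts_path (hL ▸ hk), h]
    · rw [S.trailing k hk, S'.trailing k (hL ▸ hk)]
  cases S
  cases S'
  obtain rfl := hL
  obtain rfl := hΛ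
  rfl

lemma lt_L_of_mem_parts_path {B : Finset (Fin N)} (hB : 1 < #B) {k : ℕ}
    (hk : B ∈ (S.path.get k).parts) : k < S.L := by
  by_contra! h
  rw [S.path_of_le h] at hk
  exact hB.ne' (card_eq_one_of_mem_parts_bot hk)

lemma mem_branches {B : Finset (Fin N)} :
    B ∈ S.branches ↔ 1 < #B ∧ ∃ k, B ∈ (S.path.get k).parts := by
  rw [branches, mem_sdiff, mem_biUnion, ← S.parts_path le_rfl, S.path_of_le le_rfl]
  constructor
  · rintro ⟨⟨k, hk, hB⟩, hbot⟩
    rw [mem_range] at hk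
    refine ⟨?_, k, by rwa [S.parts_path hk.le]⟩
    by_contra! h
    obtain ⟨i, rfl⟩ := card_eq_one.1 (h.antisymm (S.nonempty_mem k hk.le B hB).card_pos)
    exact hbot (Finpartition.mem_bot_iff.2 ⟨i, by simpa using S.subset_mem k hk.le _ hB, rfl⟩)
  · rintro ⟨h1, k, hB⟩
    have hk := S.lt_L_of_mem_parts_path h1 hB
    exact ⟨⟨k, mem_range.2 hk, S.parts_path hk.le ▸ hB⟩,
      fun hbot => h1.ne' (card_eq_one_of_mem_parts_bot hbot)⟩

lemma mem_parts_depth {B : Finset (Fin N)} (hB : B ∈ S.branches) :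
    B ∈ (S.path.get (S.depth B)).parts := by
  obtain ⟨h1, k, hk⟩ := S.mem_branches.1 hB
  have hkL := (S.lt_L_of_mem_parts_path h1 hk).le
  have hne : ({l ∈ range (S.L + 1) | B ∈ S.Λ l}).Nonempty :=
    ⟨k, mem_filter.2 ⟨mem_range_succ_iff.2 hkL, S.parts_path hkL ▸ hk⟩⟩
  obtain ⟨l, hl, heq⟩ := exists_mem_eq_sup _ hne id
  obtain ⟨hlL, hlB⟩ := mem_filter.1 hl
  rw [depth, heq, id, S.parts_path (mem_range_succ_iff.1 hlL)]
  exact hlB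

lemma reduced_iff_isFullSplitting :
    S.Reduced ↔ ∀ k, IsFullSplitting (S.path.get k) (S.path.get (k + 1)) := by
  constructor
  · intro hS k
    refine ⟨S.path_succ_le k, fun B hk hk' => ?_⟩
    by_contra hB
    have h1 : 1 < #B :=
      lt_of_le_of_ne' (card_pos.2 ((S.path.get k).nonempty_of_mem_parts hk)) hB
    have hbranch := S.mem_branches.2 ⟨h1, k, hk⟩
    have hdepth {l} (hl : B ∈ (S.path.get l).parts) : l = S.depth B := by
      have hlL := (S.lt_L_of_mem_parts_path h1 hl).le
      exact (hS B hbranch l hlL).1 (S.parts_path hlL ▸ hl)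
    exact k.succ_ne_self ((hdepth hk').trans (hdepth hk).symm)
  · intro h B hB l hl
    rw [← S.parts_path hl]
    refine ⟨fun hBl => ?_, fun h => h ▸ S.mem_parts_depth hB⟩
    exact eq_of_mem_parts_of_mem_parts h (S.mem_branches.1 hB).1 hBl (S.mem_parts_depth hB)

lemma path_mem_splittingPaths (hS : S.Reduced) : S.path ∈ splittingPaths ⊤ :=
  ⟨S.head_path, S.reduced_iff_isFullSplitting.1 hS⟩

open Classical in
/-- The splitting chain traced by a path of full splittings until it reaches singletons. -/
def ofPath (hI : I.Nonempty) {c : Stream' (Finpartition I)} (hc : c ∈ splittingPaths ⊤) :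
    SplChain N I :=
  have hbot := exists_get_eq_bot_of_mem_splittingPaths hc
  have hΛ {k} (hk : k ≤ Nat.find hbot) :
      (if k ≤ Nat.find hbot then (c.get k).parts else ∅) = (c.get k).parts := if_pos hk
  { L := Nat.find hbot
    Λ k := if k ≤ Nat.find hbot then (c.get k).parts else ∅
    nonempty_mem k hk B hB := (c.get k).nonempty_of_mem_parts (hΛ hk ▸ hB)
    subset_mem k hk B hB := (c.get k).subset (hΛ hk ▸ hB)
    cover k hk i hi := by rw [hΛ hk]; exact (c.get k).existsUnique_mem hi
    first := by rw [hΛ (Nat.zero_le _), ← parts_top_of_nonempty hI, ← hc.1, Stream'.head]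
    last := by
      ext B
      rw [hΛ le_rfl, Nat.find_spec hbot, Finpartition.mem_bot_iff, mem_image]
    refines k hk B hB := by
      rw [hΛ hk] at hB
      rw [hΛ hk.le]
      exact (hc.2 k).le hB
    strict k hk := by
      rw [hΛ hk, hΛ hk.le]
      exact fun h => ((hc.2 k).card_parts_lt (Nat.find_min hbot hk)).ne (h ▸ rfl)
    trailing k hk := if_neg hk.not_ge }

lemma path_ofPath (hI : I.Nonempty) {c : Stream' (Finpartition I)} (hc : c ∈ splittingPaths ⊤) :
    (ofPath hI hc).path = c := by
  ext1 k
  obtain hk | hk := le_or_gt k (ofPath hI hc).L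
  · exact Finpartition.ext (((ofPath hI hc).parts_path hk).trans (if_pos hk))
  · rw [path_of_le _ hk.le, eq_comm, ← le_bot_iff,
      ← Nat.find_spec (exists_get_eq_bot_of_mem_splittingPaths hc)]
    exact antitone_of_mem_splittingPaths hc hk.le

lemma bijOn_path (hI : I.Nonempty) :
    Set.BijOn path {S : SplChain N I | S.Reduced} (splittingPaths ⊤) where
  left S hS := S.path_mem_splittingPaths hS
  right := ⟨path_injective.injOn, fun _ hc =>
    ⟨ofPath hI hc, (reduced_iff_isFullSplitting _).2 ((path_ofPath hI hc).symm ▸ hc.2),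
      path_ofPath hI hc⟩⟩

lemma degree_eq_of_mem_parts_path (hS : S.Reduced) {B : Finset (Fin N)} (hB : 1 < #B) {k : ℕ}
    (hk : B ∈ (S.path.get k).parts) :
    S.degree B = #{C ∈ (S.path.get (k + 1)).parts | C ⊆ B} := by
  have hdepth : S.depth B = k := eq_of_mem_parts_of_mem_parts
    (S.reduced_iff_isFullSplitting.1 hS) hB (S.mem_parts_depth (S.mem_branches.2 ⟨hB, k, hk⟩)) hk
  rw [degree, hdepth, S.parts_path (S.lt_L_of_mem_parts_path hB hk)]

lemma prod_branches_eq_pathWeight {R : Type*} [CommSemiring R] (hS : S.Reduced)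
    (f : Finset (Fin N) → ℕ → R) :
    ∏ B ∈ S.branches, f B (S.degree B) = pathWeight f #I S.path := by
  have hpath := S.path_mem_splittingPaths hS
  have hbranches : S.branches =
      (range #I).biUnion fun k => {B ∈ (S.path.get k).parts | 1 < #B} := by
    ext B
    simp only [mem_branches, mem_biUnion, mem_filter, mem_range]
    refine ⟨fun ⟨h1, k, hk⟩ => ⟨k, ?_, hk, h1⟩, fun ⟨k, _, hk, h1⟩ => ⟨h1, k, hk⟩⟩
    refine (lt_card_parts_of_mem_splittingPaths hpath fun hbot => ?_).trans_le
      (Finpartition.card_parts_le_card _)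
    exact h1.ne' (card_eq_one_of_mem_parts_bot (hbot ▸ hk))
  rw [hbranches, prod_biUnion, pathWeight]
  · refine prod_congr rfl fun k _ => prod_congr rfl fun B hB => ?_
    obtain ⟨hk, h1⟩ := mem_filter.1 hB
    rw [S.degree_eq_of_mem_parts_path hS h1 hk]
  · refine fun k _ l _ hkl => disjoint_left.2 fun B hk hl => hkl ?_
    obtain ⟨hk, h1⟩ := mem_filter.1 hk
    exact eq_of_mem_parts_of_mem_parts hpath.2 h1 hk (mem_filter.1 hl).1

end SplChain

lemma IsSplittingRecursion.finsum_reduced {N : ℕ} {R : Type*} [CommSemiring R]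
    {f : Finset (Fin N) → ℕ → R} {W : Finset (Fin N) → R} (hW : IsSplittingRecursion f W)
    {I : Finset (Fin N)} (hI : I.Nonempty) :
    ∑ᶠ S ∈ {S : SplChain N I | S.Reduced}, ∏ B ∈ S.branches, f B (S.degree B) = W I := by
  rw [finsum_mem_eq_of_bijOn _ (SplChain.bijOn_path hI)
    fun S hS => S.prod_branches_eq_pathWeight hS f,
    (hW.finsum_pathWeight #I ⊤ (Nat.le_add_left _ _)).2, parts_top_of_nonempty hI, prod_singleton]

/-! ### Self-similarity of `ℤ_p` -/

section ProductMeasures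

open ProbabilityTheory

lemma pi_eq_smul_sum_map {ι κ α : Type*} [Fintype ι] [DecidableEq ι] [Fintype κ]
    [MeasurableSpace α] {ν : Measure α} [IsFiniteMeasure ν] {c : ENNReal} {φ : κ → α → α}
    (hφ : ∀ a, Measurable (φ a)) (hν : ν = c • ∑ a, ν.map (φ a)) :
    Measure.pi (fun _ : ι => ν) = c ^ Fintype.card ι •
      ∑ a : ι → κ, (Measure.pi fun _ => ν).map fun y i => φ (a i) (y i) := by
  refine Measure.pi_eq fun B _ => ?_
  simp only [Measure.pi_map_pi fun _ => (hφ _).aemeasurable, Measure.smul_apply,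
    Measure.finsetSum_apply, Measure.pi_pi, smul_eq_mul]
  refine Eq.symm ?_
  calc
    ∏ i, ν (B i) = ∏ i, c * ∑ a, ν.map (φ a) (B i) := by
      conv_lhs => rw [hν]
      simp only [Measure.smul_apply, Measure.finsetSum_apply, smul_eq_mul]
    _ = c ^ Fintype.card ι * ∑ a : ι → κ, ∏ i, ν.map (φ (a i)) (B i) := by
      rw [prod_mul_distrib, prod_const, card_univ, prod_univ_sum, Fintype.piFinset_univ]

lemma iIndep_biSup_of_pairwise_disjoint {Ω ι κ : Type*} {m : ι → MeasurableSpace Ω}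
    {_ : MeasurableSpace Ω} {μ : Measure Ω} (hm : ∀ i, m i ≤ ‹_›) (hμ : iIndep m μ)
    {S : κ → Set ι} (hS : Pairwise fun c d => Disjoint (S c) (S d)) :
    iIndep (fun c => ⨆ i ∈ S c, m i) μ := by
  classical
  have := hμ.isProbabilityMeasure
  refine (iIndep_iff _ μ).2 fun T f => ?_
  induction T using Finset.induction_on with
  | empty => simp
  | insert c T hc ih =>
    intro hf
    have hle (d) (hd : d ∈ T) : ⨆ i ∈ S d, m i ≤ ⨆ i ∈ ⋃ d ∈ T, S d, m i :=
      biSup_mono fun i hi => Set.mem_biUnion hd hi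
    have hdisj : Disjoint (S c) (⋃ d ∈ T, S d) :=
      Set.disjoint_iUnion₂_right.2 fun d hd => hS (ne_of_mem_of_not_mem hd hc).symm
    rw [set_biInter_insert, prod_insert hc, ← ih fun d hd => hf d (mem_insert_of_mem hd)]
    exact (Indep_iff _ _ μ).1 (indep_iSup_of_disjoint hm hμ hdisj) _ _ (hf c (mem_insert_self c T))
      (T.measurableSet_biInter fun d hd => hle d hd _ (hf d (mem_insert_of_mem hd)))

lemma iIndepFun_of_measurable_cylinderEvents {ι κ : Type*} [Fintype ι] {α β : Type*}
    [MeasurableSpace α] [MeasurableSpace β] {ν : Measure α} [IsProbabilityMeasure ν]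
    {S : κ → Set ι} (hS : Pairwise fun c d => Disjoint (S c) (S d)) {F : κ → (ι → α) → β}
    (hF : ∀ c, Measurable[cylinderEvents (S c)] (F c)) :
    iIndepFun F (Measure.pi fun _ => ν) := by
  have hcoord : iIndepFun (fun i (x : ι → α) => x i) (Measure.pi fun _ => ν) :=
    iIndepFun_pi (μ := fun _ => ν) (X := fun _ => id) fun _ => aemeasurable_id
  exact (iIndepFun_iff_iIndep _ _ _).2 <| iIndep_of_iIndep_of_le
    (iIndep_biSup_of_pairwise_disjoint (fun i => (measurable_pi_apply i).comap_le)
      ((iIndepFun_iff_iIndep _ _ _).1 hcoord) hS) fun c => (hF c).comap_le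

end ProductMeasures

section SelfSimilarity

variable {p : ℕ} [Fact p.Prime]

/-- The affine bijection `y ↦ a + p y` of `ℤ_p` onto the residue class of `a` modulo `p`. -/
noncomputable def residueMap (a : Fin p) (y : ℚ_[p]) : ℚ_[p] := (a : ℕ) + p * y

lemma measurable_residueMap (a : Fin p) : Measurable (residueMap a) :=
  (measurable_id.const_mul _).const_add _

lemma measurable_residueMap_pi {ι : Type*} (a : ι → Fin p) :
    Measurable fun (y : ι → ℚ_[p]) i => residueMap (a i) (y i) :=
  measurable_pi_lambda _ fun i => (measurable_residueMap (a i)).comp (measurable_pi_apply i)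

lemma measurableSet_zball : MeasurableSet (Zball p) := measurable_norm measurableSet_Iic

lemma norm_p_mul_lt_one_iff {y : ℚ_[p]} : ‖p * y‖ < 1 ↔ y ∈ Zball p := by
  have hp : (0 : ℝ) < p := mod_cast (Fact.out : p.Prime).pos
  have h := Padic.norm_le_pow_iff_norm_lt_pow_add_one y 0
  rw [zpow_zero, zero_add, zpow_one] at h
  rw [norm_mul, Padic.norm_p, inv_mul_lt_iff₀ hp, mul_one]
  exact h.symm

lemma norm_natCast_sub_natCast {a b : Fin p} (h : a ≠ b) :
    ‖((a : ℕ) : ℚ_[p]) - (b : ℕ)‖ = 1 := by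
  have hcast : ((a : ℕ) : ℚ_[p]) - (b : ℕ) = ((a - b : ℤ) : ℚ_[p]) := by push_cast; rfl
  rw [hcast]
  refine (Padic.norm_int_le_one _).antisymm (not_lt.1 fun hlt => h (Fin.ext ?_))
  have := Int.eq_zero_of_abs_lt_dvd ((Padic.norm_intCast_lt_one_iff).1 hlt)
    (by rw [abs_lt]; omega)
  omega

lemma norm_residueMap_sub_residueMap_of_ne {a b : Fin p} (h : a ≠ b) {x y : ℚ_[p]}
    (hx : x ∈ Zball p) (hy : y ∈ Zball p) : ‖residueMap a x - residueMap b y‖ = 1 := by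
  have hlt : ‖p * (x - y)‖ < 1 := norm_p_mul_lt_one_iff.2 <| by
    rw [sub_eq_add_neg]
    exact (IsUltrametricDist.norm_add_le_max _ _).trans (max_le hx ((norm_neg y).trans_le hy))
  have hsub : residueMap a x - residueMap b y =
      (((a : ℕ) : ℚ_[p]) - (b : ℕ)) + p * (x - y) := by
    simp only [residueMap]; ring
  rw [hsub, IsUltrametricDist.norm_add_eq_max_of_norm_ne_norm, norm_natCast_sub_natCast h,
    max_eq_left hlt.le]
  rw [norm_natCast_sub_natCast h]
  exact hlt.ne'

lemma pairwise_disjoint_ball_natCast :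
    Pairwise fun a b : Fin p =>
      Disjoint (Metric.ball ((a : ℕ) : ℚ_[p]) 1) (Metric.ball ((b : ℕ) : ℚ_[p]) 1) := by
  intro a b hab
  refine (IsUltrametricDist.ball_eq_or_disjoint _ _ _).resolve_left fun h => ?_
  have := h.subset (Metric.mem_ball_self one_pos)
  rw [mem_ball_iff_norm, norm_natCast_sub_natCast hab] at this
  exact lt_irrefl _ this

lemma iUnion_ball_natCast : ⋃ a : Fin p, Metric.ball ((a : ℕ) : ℚ_[p]) 1 = Zball p := by
  ext x
  simp only [Set.mem_iUnion, mem_ball_iff_norm]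
  constructor
  · rintro ⟨a, ha⟩
    have hnat : ‖((a : ℕ) : ℚ_[p])‖ ≤ 1 := mod_cast Padic.norm_int_le_one (p := p) (a : ℕ)
    have hadd := IsUltrametricDist.norm_add_le_max (x - (a : ℕ)) ((a : ℕ) : ℚ_[p])
    rw [sub_add_cancel] at hadd
    exact hadd.trans (max_le ha.le hnat)
  · intro hx
    obtain ⟨z, rfl⟩ : ∃ z : ℤ_[p], (z : ℚ_[p]) = x := ⟨⟨x, hx⟩, rfl⟩
    have hlt := PadicInt.norm_sub_zmodRepr_lt_one (z : ℤ_[p])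
    rw [PadicInt.norm_def, PadicInt.coe_sub, PadicInt.coe_natCast] at hlt
    exact ⟨⟨_, PadicInt.zmodRepr_lt_p _⟩, hlt⟩

lemma residueMap_preimage_ball (a : Fin p) :
    residueMap a ⁻¹' Metric.ball ((a : ℕ) : ℚ_[p]) 1 = Zball p := by
  ext y
  rw [Set.mem_preimage, mem_ball_iff_norm, residueMap, add_sub_cancel_left, norm_p_mul_lt_one_iff]

variable (μ : Measure ℚ_[p]) [μ.IsAddHaarMeasure]

lemma exists_map_residueMap_eq_smul : ∃ c : NNReal, ∀ a, μ.map (residueMap a) = c • μ := by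
  have hp : (p : ℚ_[p]) ≠ 0 := mod_cast (Fact.out : p.Prime).ne_zero
  let e : ℚ_[p] ≃L[ℚ_[p]] ℚ_[p] := ContinuousLinearEquiv.unitsEquivAut ℚ_[p] (Units.mk0 _ hp)
  have := e.isAddHaarMeasure_map μ
  refine ⟨Measure.addHaarScalarFactor (μ.map e) μ, fun a => ?_⟩
  have hcomp : residueMap a = (fun z => ((a : ℕ) : ℚ_[p]) + z) ∘ e := by
    ext y
    simp [residueMap, e, mul_comm]
  rw [hcomp, ← Measure.map_map (measurable_const_add _) e.continuous.measurable,
    map_add_left_eq_self]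
  exact Measure.isAddLeftInvariant_eq_smul _ _

variable {μ} [IsProbabilityMeasure (μ.restrict (Zball p))]

lemma restrict_zball_eq_smul_sum_map :
    μ.restrict (Zball p) = (p : ENNReal)⁻¹ • ∑ a, (μ.restrict (Zball p)).map (residueMap a) := by
  obtain ⟨c, hc⟩ := exists_map_residueMap_eq_smul μ
  have hmap (a : Fin p) : (μ.restrict (Zball p)).map (residueMap a) =
      c • μ.restrict (Metric.ball ((a : ℕ) : ℚ_[p]) 1) := by
    rw [← Measure.restrict_smul, ← hc a, Measure.restrict_map (measurable_residueMap a)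
      measurableSet_ball, residueMap_preimage_ball]
  have hsum : ∑ a : Fin p, μ.restrict (Metric.ball ((a : ℕ) : ℚ_[p]) 1) =
      μ.restrict (Zball p) := by
    rw [← iUnion_ball_natCast, Measure.restrict_iUnion pairwise_disjoint_ball_natCast
      fun _ => measurableSet_ball, Measure.sum_fintype]
  have hsmul : ∑ a, (μ.restrict (Zball p)).map (residueMap a) = c • μ.restrict (Zball p) := by
    rw [← hsum, smul_sum, hsum, sum_congr rfl fun a _ => hmap a]
  have hcp : (c : ENNReal) = p := by
    have (a : Fin p) := Measure.isProbabilityMeasure_map (μ := μ.restrict (Zball p))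
      (measurable_residueMap a).aemeasurable
    have huniv := congrArg (fun ν => ν Set.univ) hsmul
    simpa only [Measure.finsetSum_apply, measure_univ, sum_const, card_univ, Fintype.card_fin,
      Measure.smul_apply, ENNReal.smul_def, smul_eq_mul, mul_one, nsmul_eq_mul] using huniv.symm
  rw [hsmul, ENNReal.smul_def, hcp, smul_smul, ENNReal.inv_mul_cancel _ (ENNReal.natCast_ne_top p),
    one_smul]
  exact mod_cast (Fact.out : p.Prime).ne_zero

/-- The measure `ν` lives on `ℤ_p` and is the average of its images under the `p` residue maps:
if `y` is distributed according to `ν` and the digit `a` is uniform, then so is `a + p y`. -/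
structure IsSelfSimilar (ν : Measure ℚ_[p]) : Prop where
  ae_mem : ∀ᵐ x ∂ν, x ∈ Zball p
  eq_smul_sum_map : ν = (p : ENNReal)⁻¹ • ∑ a, ν.map (residueMap a)

lemma isSelfSimilar_restrict_zball : IsSelfSimilar (μ.restrict (Zball p)) :=
  ⟨ae_restrict_mem measurableSet_zball, restrict_zball_eq_smul_sum_map⟩

namespace IsSelfSimilar

variable {ν : Measure ℚ_[p]} [IsProbabilityMeasure ν] {ι : Type*} [Fintype ι]

lemma ae_pi_mem (hν : IsSelfSimilar ν) :
    ∀ᵐ y ∂Measure.pi fun _ : ι => ν, ∀ i, y i ∈ Zball p :=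
  ae_all_iff.2 fun i => (Measure.quasiMeasurePreserving_eval (fun _ => ν) i).ae hν.ae_mem

variable [DecidableEq ι]

lemma lintegral_pi (hν : IsSelfSimilar ν) {f : (ι → ℚ_[p]) → ENNReal} (hf : Measurable f) :
    ∫⁻ x, f x ∂Measure.pi (fun _ => ν) = (p : ENNReal)⁻¹ ^ Fintype.card ι *
      ∑ a : ι → Fin p, ∫⁻ y, f (fun i => residueMap (a i) (y i)) ∂Measure.pi fun _ => ν := by
  conv_lhs => rw [pi_eq_smul_sum_map measurable_residueMap hν.eq_smul_sum_map,
    lintegral_smul_measure, lintegral_finsetSum_measure, smul_eq_mul]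
  simp only [lintegral_map hf (measurable_residueMap_pi _)]

lemma integral_pi (hν : IsSelfSimilar ν) {f : (ι → ℚ_[p]) → ℂ} (hf : Measurable f)
    (hint : Integrable f (Measure.pi fun _ => ν)) :
    ∫ x, f x ∂Measure.pi (fun _ => ν) = (p : ℂ)⁻¹ ^ Fintype.card ι *
      ∑ a : ι → Fin p, ∫ y, f (fun i => residueMap (a i) (y i)) ∂Measure.pi fun _ => ν := by
  have hp : (p : ENNReal) ≠ 0 := mod_cast (Fact.out : p.Prime).ne_zero
  have hpi := pi_eq_smul_sum_map (ι := ι) measurable_residueMap hν.eq_smul_sum_map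
  rw [hpi, integrable_smul_measure (pow_ne_zero _ (ENNReal.inv_ne_zero.2 (by simp)))
    (ENNReal.pow_ne_top (ENNReal.inv_ne_top.2 hp)), integrable_finsetSum_measure] at hint
  conv_lhs => rw [hpi, integral_smul_measure, integral_finsetSum_measure hint]
  simp only [integral_map (measurable_residueMap_pi _).aemeasurable hf.aestronglyMeasurable,
    Complex.real_smul, ENNReal.toReal_pow, ENNReal.toReal_inv, ENNReal.toReal_natCast,
    Complex.ofReal_pow, Complex.ofReal_inv, Complex.ofReal_natCast]

end IsSelfSimilar

end SelfSimilarity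

/-! ### Coulomb integrals -/

section CoulombFactor

variable {p : ℕ} [Fact p.Prime] {N : ℕ}

/-- The pairs `i < j` of indices in `I`. -/
def pairsIn (I : Finset (Fin N)) : Finset (Fin N × Fin N) :=
  {q ∈ pairs N | q.1 ∈ I ∧ q.2 ∈ I}

lemma mem_pairsIn {I : Finset (Fin N)} {q : Fin N × Fin N} :
    q ∈ pairsIn I ↔ q.1 < q.2 ∧ q.1 ∈ I ∧ q.2 ∈ I := by
  simp [pairsIn, pairs]

lemma pairsIn_of_card_le_one {I : Finset (Fin N)} (hI : #I ≤ 1) : pairsIn I = ∅ :=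
  eq_empty_of_forall_notMem fun _ hq =>
    have ⟨hlt, h1, h2⟩ := mem_pairsIn.1 hq
    hlt.ne (card_le_one.1 hI _ h1 _ h2)

lemma pairsIn_univ : pairsIn (univ : Finset (Fin N)) = pairs N :=
  filter_true_of_mem fun _ _ => ⟨mem_univ _, mem_univ _⟩

/-- The sum of the exponents `s_{ij}` over the pairs `i < j` in `I`: under `x ↦ p x` the Coulomb
factor of `I` is multiplied by `p` to the power `-exponentSum s I`. -/
def exponentSum (s : Fin N → Fin N → ℂ) (I : Finset (Fin N)) : ℂ :=
  ∑ q ∈ pairsIn I, s q.1 q.2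

/-- The factor `∏_{i<j} |x_i - x_j|^{s_{ij}}` of the integrand contributed by the pairs in `I`. -/
noncomputable def coulomb (s : Fin N → Fin N → ℂ) (I : Finset (Fin N)) (x : Fin N → ℚ_[p]) : ℂ :=
  ∏ q ∈ pairsIn I, (‖x q.1 - x q.2‖ : ℂ) ^ s q.1 q.2

variable {s : Fin N → Fin N → ℂ} {I : Finset (Fin N)}

lemma coulomb_univ : coulomb (p := p) s univ =
    fun x => ∏ q ∈ pairs N, (‖x q.1 - x q.2‖ : ℂ) ^ s q.1 q.2 := by
  ext x
  rw [coulomb, pairsIn_univ]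

lemma coulomb_of_card_le_one (hI : #I ≤ 1) (x : Fin N → ℚ_[p]) : coulomb s I x = 1 := by
  rw [coulomb, pairsIn_of_card_le_one hI, prod_empty]

lemma measurable_cylinderEvents_coulomb :
    Measurable[cylinderEvents (I : Set (Fin N))] (coulomb (p := p) s I) := by
  have hcoord {i : Fin N} (hi : i ∈ I) :
      Measurable[cylinderEvents (I : Set (Fin N))] fun x : Fin N → ℚ_[p] => x i :=
    measurable_cylinderEvent_apply hi
  refine measurable_fun_prod _ fun q hq => ?_
  have ⟨_, h1, h2⟩ := mem_pairsIn.1 hq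
  exact (Complex.measurable_ofReal.comp
    (measurable_norm.comp ((hcoord h1).sub (hcoord h2)))).pow_const _

lemma measurable_coulomb : Measurable (coulomb (p := p) s I) :=
  measurable_cylinderEvents_coulomb.mono cylinderEvents_le_pi le_rfl

lemma measurable_coulomb_smul :
    Measurable fun y : Fin N → ℚ_[p] => coulomb s I ((p : ℚ_[p]) • y) :=
  measurable_coulomb.comp (measurable_const_smul _)

lemma coulomb_smul (x : Fin N → ℚ_[p]) :
    coulomb s I ((p : ℚ_[p]) • x) = (p : ℂ) ^ (-exponentSum s I) * coulomb s I x := by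
  have hp : (p : ℂ) ≠ 0 := mod_cast (Fact.out : p.Prime).ne_zero
  have hfactor (q : Fin N × Fin N) :
      (‖((p : ℚ_[p]) • x) q.1 - ((p : ℚ_[p]) • x) q.2‖ : ℂ) ^ s q.1 q.2 =
        (p : ℂ) ^ (-s q.1 q.2) * (‖x q.1 - x q.2‖ : ℂ) ^ s q.1 q.2 := by
    rw [Pi.smul_apply, Pi.smul_apply, ← smul_sub, norm_smul, Padic.norm_p, Complex.ofReal_mul,
      Complex.mul_cpow_ofReal_nonneg (by positivity) (norm_nonneg _), Complex.ofReal_inv,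
      Complex.ofReal_natCast, Complex.inv_cpow _ _ (by simp [Real.pi_ne_zero.symm]),
      Complex.cpow_neg]
  have hexp : ∏ q ∈ pairsIn I, (p : ℂ) ^ (-s q.1 q.2) = (p : ℂ) ^ (-exponentSum s I) := by
    simp only [Complex.cpow_def_of_ne_zero hp, ← Complex.exp_sum, ← mul_sum, sum_neg_distrib,
      exponentSum]
  simp only [coulomb, hfactor, prod_mul_distrib, hexp]

lemma coulomb_residueMap (a : Fin N → Fin p) {y : Fin N → ℚ_[p]} (hy : ∀ i, y i ∈ Zball p) :
    coulomb s I (fun i => residueMap (a i) (y i)) =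
      ∏ c, coulomb s (colorClass I a c) ((p : ℚ_[p]) • y) := by
  rw [coulomb, ← prod_fiberwise _ fun q => a q.1]
  refine prod_congr rfl fun c _ => ?_
  rw [coulomb, ← prod_subset (s₁ := pairsIn (colorClass I a c))]
  · refine prod_congr rfl fun q hq => ?_
    have ⟨_, h1, h2⟩ := mem_pairsIn.1 hq
    rw [residueMap, residueMap, (mem_colorClass.1 h1).2, (mem_colorClass.1 h2).2,
      add_sub_add_left_eq_sub]
    rfl
  · intro q hq
    have ⟨hlt, h1, h2⟩ := mem_pairsIn.1 hq
    rw [mem_colorClass] at h1 h2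
    exact mem_filter.2 ⟨mem_pairsIn.2 ⟨hlt, h1.1, h2.1⟩, h1.2⟩
  · intro q hq hq'
    obtain ⟨hqI, rfl⟩ := mem_filter.1 hq
    have ⟨hlt, h1, h2⟩ := mem_pairsIn.1 hqI
    have hne : a q.1 ≠ a q.2 := fun h => hq' <|
      mem_pairsIn.2 ⟨hlt, mem_colorClass.2 ⟨h1, rfl⟩, mem_colorClass.2 ⟨h2, h.symm⟩⟩
    rw [norm_residueMap_sub_residueMap_of_ne hne (hy _) (hy _), Complex.ofReal_one,
      Complex.one_cpow]

lemma cpow_neg_eexp (hI : I.Nonempty) :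
    (p : ℂ) ^ (-eexp I s) = (p : ℂ)⁻¹ ^ (#I - 1) * (p : ℂ) ^ (-exponentSum s I) := by
  have hp : (p : ℂ) ≠ 0 := mod_cast (Fact.out : p.Prime).ne_zero
  have heexp : -eexp I s = -((#I - 1 : ℕ) : ℂ) + -exponentSum s I := by
    rw [Nat.cast_sub hI.card_pos, Nat.cast_one, ← neg_add]
    rfl
  rw [heexp, Complex.cpow_add _ _ hp, Complex.cpow_neg, Complex.cpow_natCast, inv_pow]

lemma enorm_cpow_neg_eexp (hI : I.Nonempty) :
    ‖(p : ℂ) ^ (-eexp I s)‖ₑ =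
      (p : ENNReal)⁻¹ ^ (#I - 1) * ‖(p : ℂ) ^ (-exponentSum s I)‖ₑ := by
  have hp : (p : ℂ) ≠ 0 := mod_cast (Fact.out : p.Prime).ne_zero
  have hp' : ‖(p : ℂ)‖ₑ = p := by
    rw [← ofReal_norm, Complex.norm_natCast, ENNReal.ofReal_natCast]
  rw [cpow_neg_eexp hI, enorm_mul, enorm_pow, enorm_inv hp, hp']

lemma enorm_cpow_neg_lt_one_iff {z : ℂ} : ‖(p : ℂ) ^ (-z)‖ₑ < 1 ↔ 0 < z.re := by
  have hp := (Fact.out : p.Prime).one_lt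
  rw [← ofReal_norm, ENNReal.ofReal_lt_one, Complex.norm_natCast_cpow_of_pos (by omega),
    Real.rpow_lt_one_iff_of_pos (by positivity)]
  have : (1 : ℝ) < p := mod_cast hp
  simp [this, this.not_gt]

end CoulombFactor

section Moments

open ProbabilityTheory

variable {p : ℕ} [Fact p.Prime] {N : ℕ}

/-- The integral of the absolute value of the Coulomb factor of `I`, rescaled to `p ℤ_p`. This is
the weight of a block of particles that share their first digit. -/
noncomputable def absMoment (ν : Measure ℚ_[p]) (s : Fin N → Fin N → ℂ) (I : Finset (Fin N)) :
    ENNReal :=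
  ∫⁻ y, ‖coulomb s I ((p : ℚ_[p]) • y)‖ₑ ∂Measure.pi fun _ => ν

/-- The integral of the Coulomb factor of `I`, rescaled to `p ℤ_p`: the complex counterpart
of `absMoment`. -/
noncomputable def moment (ν : Measure ℚ_[p]) (s : Fin N → Fin N → ℂ) (I : Finset (Fin N)) : ℂ :=
  ∫ y, coulomb s I ((p : ℚ_[p]) • y) ∂Measure.pi fun _ => ν

variable {s : Fin N → Fin N → ℂ} {I : Finset (Fin N)} {ν : Measure ℚ_[p]}

lemma absMoment_eq_mul : absMoment ν s I =
    ‖(p : ℂ) ^ (-exponentSum s I)‖ₑ * ∫⁻ x, ‖coulomb s I x‖ₑ ∂Measure.pi fun _ => ν := by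
  simp only [absMoment, coulomb_smul, enorm_mul]
  exact lintegral_const_mul _ measurable_coulomb.enorm

lemma moment_eq_mul : moment ν s I =
    (p : ℂ) ^ (-exponentSum s I) * ∫ x, coulomb s I x ∂Measure.pi fun _ => ν := by
  simp only [moment, coulomb_smul]
  exact integral_const_mul _ _

lemma integrable_coulomb_iff :
    Integrable (coulomb s I) (Measure.pi fun _ => ν) ↔ absMoment ν s I ≠ ⊤ := by
  have hp : (p : ℂ) ≠ 0 := mod_cast (Fact.out : p.Prime).ne_zero
  rw [Integrable, and_iff_right measurable_coulomb.aestronglyMeasurable,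
    hasFiniteIntegral_iff_enorm, lt_top_iff_ne_top, absMoment_eq_mul, Ne, Ne, ENNReal.mul_eq_top]
  simp [hp]

variable [IsProbabilityMeasure ν]

lemma absMoment_of_card_le_one (hI : #I ≤ 1) : absMoment ν s I = 1 := by
  simp [absMoment, coulomb_of_card_le_one hI]

lemma moment_of_card_le_one (hI : #I ≤ 1) : moment ν s I = 1 := by
  simp [moment, coulomb_of_card_le_one hI]

lemma iIndepFun_coulomb_colorClass (I : Finset (Fin N)) (a : Fin N → Fin p) :
    iIndepFun (fun c y => coulomb s (colorClass I a c) ((p : ℚ_[p]) • y))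
      (Measure.pi fun _ => ν) := by
  refine iIndepFun_of_measurable_cylinderEvents
    (fun c d hcd => disjoint_coe.2 (pairwise_disjoint_colorClass I a hcd)) fun c => ?_
  simp only [coulomb_smul]
  exact measurable_cylinderEvents_coulomb.const_mul _

lemma lintegral_prod_coulomb_colorClass (I : Finset (Fin N)) (a : Fin N → Fin p) :
    ∫⁻ y, ∏ c, ‖coulomb s (colorClass I a c) ((p : ℚ_[p]) • y)‖ₑ ∂Measure.pi (fun _ => ν) =
      ∏ c, absMoment ν s (colorClass I a c) :=
  lintegral_prod_eq_prod_lintegral_of_indepFun _ _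
    ((iIndepFun_coulomb_colorClass I a).comp (fun _ => enorm) fun _ => measurable_enorm)
    fun _ => measurable_coulomb_smul.enorm

lemma integral_prod_coulomb_colorClass (I : Finset (Fin N)) (a : Fin N → Fin p) :
    ∫ y, ∏ c, coulomb s (colorClass I a c) ((p : ℚ_[p]) • y) ∂Measure.pi (fun _ => ν) =
      ∏ c, moment ν s (colorClass I a c) :=
  (iIndepFun_coulomb_colorClass I a).integral_fun_prod_eq_prod_integral
    fun _ => measurable_coulomb_smul.aestronglyMeasurable

namespace IsSelfSimilar

lemma lintegral_comp_coulomb (hν : IsSelfSimilar ν) {Φ : ENNReal → ENNReal} (hΦ : Measurable Φ) :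
    ∫⁻ x, Φ ‖coulomb s I x‖ₑ ∂Measure.pi (fun _ => ν) = (p : ENNReal)⁻¹ ^ N *
      ∑ a : Fin N → Fin p, ∫⁻ y, Φ (∏ c, ‖coulomb s (colorClass I a c) ((p : ℚ_[p]) • y)‖ₑ)
        ∂Measure.pi fun _ => ν := by
  rw [hν.lintegral_pi (f := fun x => Φ ‖coulomb s I x‖ₑ) (hΦ.comp measurable_coulomb.enorm),
    Fintype.card_fin]
  refine congrArg _ (sum_congr rfl fun a _ => lintegral_congr_ae ?_)
  filter_upwards [hν.ae_pi_mem] with y hy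
  rw [coulomb_residueMap a hy]
  simp only [enorm_eq_nnnorm, nnnorm_prod, ENNReal.ofNNReal_finsetProd]

lemma lintegral_coulomb (hν : IsSelfSimilar ν) :
    ∫⁻ x, ‖coulomb s I x‖ₑ ∂Measure.pi (fun _ => ν) = (p : ENNReal)⁻¹ ^ N *
      ∑ a : Fin N → Fin p, ∏ c, absMoment ν s (colorClass I a c) := by
  simpa only [id, lintegral_prod_coulomb_colorClass] using hν.lintegral_comp_coulomb measurable_id

lemma integral_coulomb (hν : IsSelfSimilar ν)
    (hint : Integrable (coulomb s I) (Measure.pi fun _ => ν)) :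
    ∫ x, coulomb s I x ∂Measure.pi (fun _ => ν) = (p : ℂ)⁻¹ ^ N *
      ∑ a : Fin N → Fin p, ∏ c, moment ν s (colorClass I a c) := by
  rw [hν.integral_pi measurable_coulomb hint, Fintype.card_fin]
  refine congrArg _ (sum_congr rfl fun a _ => ?_)
  rw [← integral_prod_coulomb_colorClass]
  refine integral_congr_ae ?_
  filter_upwards [hν.ae_pi_mem] with y hy
  rw [coulomb_residueMap a hy]

end IsSelfSimilar

end Moments

section Convergence

variable {p : ℕ} [Fact p.Prime] {N : ℕ} {s : Fin N → Fin N → ℂ} {I : Finset (Fin N)}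

lemma natCast_inv_mul_card_fin : (p : ENNReal)⁻¹ * Fintype.card (Fin p) = 1 := by
  rw [Fintype.card_fin]
  exact ENNReal.inv_mul_cancel (by simp [(Fact.out : p.Prime).ne_zero]) (ENNReal.natCast_ne_top p)

variable {ν : Measure ℚ_[p]} [IsProbabilityMeasure ν]

namespace IsSelfSimilar

lemma lintegral_coulomb_eq_add (hν : IsSelfSimilar ν) (hI : I.Nonempty) :
    ∫⁻ x, ‖coulomb s I x‖ₑ ∂Measure.pi (fun _ => ν) =
      (p : ENNReal)⁻¹ ^ (#I - 1) * (absMoment ν s I + splitSum p (absMoment ν s) I) := by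
  have h := pow_mul_sum_prod_colorClass (natCast_inv_mul_card_fin (p := p)) hI
    (absMoment_of_card_le_one (p := p) (ν := ν) (s := s) (I := ∅) (by simp))
  rwa [Fintype.card_fin, Fintype.card_fin, ← hν.lintegral_coulomb] at h

lemma absMoment_eq_mul_add (hν : IsSelfSimilar ν) (hI : I.Nonempty) :
    absMoment ν s I =
      ‖(p : ℂ) ^ (-eexp I s)‖ₑ * (absMoment ν s I + splitSum p (absMoment ν s) I) := by
  conv_lhs => rw [absMoment_eq_mul, hν.lintegral_coulomb_eq_add hI]
  rw [enorm_cpow_neg_eexp hI]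
  ring

lemma absMoment_ne_zero (hν : IsSelfSimilar ν) (s : Fin N → Fin N → ℂ) (I : Finset (Fin N)) :
    absMoment ν s I ≠ 0 := by
  have hp : (p : ℂ) ≠ 0 := mod_cast (Fact.out : p.Prime).ne_zero
  induction I using Finset.strongInduction with
  | H I ih =>
    obtain hI | hI := le_or_gt #I 1
    · rw [absMoment_of_card_le_one hI]
      exact one_ne_zero
    · rw [hν.absMoment_eq_mul_add (card_pos.1 (by omega))]
      refine mul_ne_zero (enorm_ne_zero.2 (by simp [hp])) fun h => ?_
      exact splitSum_ne_zero (Fact.out : p.Prime).one_lt hI ih (add_eq_zero.1 h).2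

lemma absMoment_ne_top_of_subset (hν : IsSelfSimilar ν) {J : Finset (Fin N)} (hIJ : I ⊆ J)
    (hJ : absMoment ν s J ≠ ⊤) : absMoment ν s I ≠ ⊤ := by
  have : Nontrivial (Fin p) := Fin.nontrivial_iff_two_le.2 (Fact.out : p.Prime).two_le
  obtain ⟨c, d, hcd⟩ := exists_pair_ne (Fin p)
  have hclass : colorClass J (fun i => if i ∈ I then c else d) c = I := by
    ext i
    by_cases hi : i ∈ I
    · simp [mem_colorClass, hi, hIJ hi]
    · simp [mem_colorClass, hi, hcd.symm]
  have hsum := (integrable_coulomb_iff.2 hJ).2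
  rw [hasFiniteIntegral_iff_enorm, hν.lintegral_coulomb, lt_top_iff_ne_top] at hsum
  have hprod := ENNReal.sum_ne_top.1 (ENNReal.lt_top_of_mul_ne_top_right hsum (by simp)).ne
    (fun i => if i ∈ I then c else d) (mem_univ _)
  rw [← mul_prod_erase _ _ (mem_univ c), hclass] at hprod
  exact (ENNReal.lt_top_of_mul_ne_top_left hprod
    (prod_ne_zero_iff.2 fun _ _ => hν.absMoment_ne_zero s _)).ne

lemma eexp_re_pos (hν : IsSelfSimilar ν) (hI : 1 < #I) (h : absMoment ν s I ≠ ⊤) :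
    0 < (eexp I s).re := by
  have hsplit := splitSum_ne_zero (Fact.out : p.Prime).one_lt hI
    fun B _ => hν.absMoment_ne_zero s B
  rw [← enorm_cpow_neg_lt_one_iff (p := p)]
  by_contra! hle
  refine (ENNReal.lt_add_right h hsplit).not_ge ?_
  calc
    absMoment ν s I + splitSum p (absMoment ν s) I
        ≤ ‖(p : ℂ) ^ (-eexp I s)‖ₑ * (absMoment ν s I + splitSum p (absMoment ν s) I) :=
      le_mul_of_one_le_left' hle
    _ = absMoment ν s I := (hν.absMoment_eq_mul_add (card_pos.1 (by omega))).symm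

end IsSelfSimilar

end Convergence

section Truncation

lemma lintegral_le_of_forall_lintegral_min_le {α : Type*} [MeasurableSpace α] {μ : Measure α}
    {f : α → ENNReal} (hf : Measurable f) {C : ENNReal}
    (h : ∀ n : ℕ, ∫⁻ x, min (f x) n ∂μ ≤ C) : ∫⁻ x, f x ∂μ ≤ C := by
  have hsup (x : α) : f x = ⨆ n : ℕ, min (f x) n := by
    rw [← inf_iSup_eq, ENNReal.iSup_natCast, inf_top_eq]
  have hmono : Monotone fun (n : ℕ) x => min (f x) (n : ENNReal) := fun m n hmn x =>
    min_le_min_left _ (Nat.cast_le.2 hmn)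
  calc
    ∫⁻ x, f x ∂μ = ∫⁻ x, ⨆ n : ℕ, min (f x) n ∂μ := lintegral_congr hsup
    _ = ⨆ n : ℕ, ∫⁻ x, min (f x) n ∂μ := lintegral_iSup (fun n => hf.min measurable_const) hmono
    _ ≤ C := iSup_le h

lemma le_div_of_le_mul_add {x r C : ENNReal} (hx : x ≠ ⊤) (hr : r < 1) (h : x ≤ r * x + C) :
    x ≤ C / (1 - r) := by
  rw [ENNReal.le_div_iff_mul_le (.inl (tsub_pos_of_lt hr).ne') (.inl (by finiteness)),
    ENNReal.mul_sub fun _ _ => hx, mul_one, tsub_le_iff_left, mul_comm x]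
  exact h

end Truncation

section Finiteness

variable {p : ℕ} [Fact p.Prime] {N : ℕ} {s : Fin N → Fin N → ℂ} {I : Finset (Fin N)}
  {ν : Measure ℚ_[p]}

/-- The absolute moments, with that of `I` replaced by a multiple of the integral truncated at `M`.
The latter is known to be finite in advance, so that it can be absorbed in an inequality. -/
noncomputable def truncMoment (ν : Measure ℚ_[p]) (s : Fin N → Fin N → ℂ) (I : Finset (Fin N))
    (M : ENNReal) : Finset (Fin N) → ENNReal :=
  Function.update (absMoment ν s) I <| max 1 ‖(p : ℂ) ^ (-exponentSum s I)‖ₑ *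
    ∫⁻ x, min ‖coulomb s I x‖ₑ M ∂Measure.pi fun _ => ν

lemma truncMoment_of_ssubset {M : ENNReal} {B : Finset (Fin N)} (hB : B ⊂ I) :
    truncMoment ν s I M B = absMoment ν s B := Function.update_of_ne hB.ne _ _

lemma lintegral_min_coulomb_smul_le (M : ENNReal) :
    ∫⁻ y, min ‖coulomb s I ((p : ℚ_[p]) • y)‖ₑ M ∂Measure.pi (fun _ => ν) ≤
      truncMoment ν s I M I := by
  rw [truncMoment, Function.update_self,
    ← lintegral_const_mul _ (measurable_coulomb.enorm.min measurable_const)]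
  refine lintegral_mono fun y => ?_
  rw [coulomb_smul, enorm_mul, mul_min]
  exact min_le_min (by gcongr; exact le_max_right _ _) (le_mul_of_one_le_left' (le_max_left _ _))

variable [IsProbabilityMeasure ν]

lemma lintegral_min_prod_coulomb_colorClass_le (hI : I.Nonempty) (a : Fin N → Fin p)
    (M : ENNReal) :
    ∫⁻ y, min (∏ c, ‖coulomb s (colorClass I a c) ((p : ℚ_[p]) • y)‖ₑ) M
        ∂Measure.pi (fun _ => ν) ≤ ∏ c, truncMoment ν s I M (colorClass I a c) := by
  by_cases hmono : ∃ c, colorClass I a c = I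
  · obtain ⟨c, hc⟩ := hmono
    have hempty {d : Fin p} (hd : d ≠ c) : colorClass I a d = ∅ :=
      disjoint_self.1 <| (pairwise_disjoint_colorClass I a hd).mono_right
        ((colorClass_subset I a d).trans hc.ge)
    rw [prod_eq_single c (fun d _ hd => by rw [hempty hd, truncMoment_of_ssubset
      hI.empty_ssubset, absMoment_of_card_le_one (by simp)]) (by simp), hc]
    refine le_of_eq_of_le (lintegral_congr fun y => ?_) (lintegral_min_coulomb_smul_le M)
    rw [prod_eq_single c (fun d _ hd => by rw [hempty hd, coulomb_of_card_le_one (by simp),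
      enorm_one]) (by simp), hc]
  · rw [prod_congr rfl fun c _ => truncMoment_of_ssubset <|
      (colorClass_subset I a c).ssubset_of_ne fun h => hmono ⟨c, h⟩,
      ← lintegral_prod_coulomb_colorClass]
    exact lintegral_mono fun y => min_le_left _ _

namespace IsSelfSimilar

lemma lintegral_min_coulomb_le (hν : IsSelfSimilar ν) (hI : I.Nonempty) (M : ENNReal) :
    ∫⁻ x, min ‖coulomb s I x‖ₑ M ∂Measure.pi (fun _ => ν) ≤
      (p : ENNReal)⁻¹ ^ (#I - 1) * (truncMoment ν s I M I + splitSum p (absMoment ν s) I) := by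
  have hV : truncMoment ν s I M ∅ = 1 := by
    rw [truncMoment_of_ssubset hI.empty_ssubset, absMoment_of_card_le_one (by simp)]
  have h := pow_mul_sum_prod_colorClass (natCast_inv_mul_card_fin (p := p)) hI hV
  rw [Fintype.card_fin, Fintype.card_fin,
    splitSum_congr fun B hB => truncMoment_of_ssubset (ν := ν) (s := s) hB] at h
  rw [hν.lintegral_comp_coulomb (Φ := (min · M)) (measurable_id.min measurable_const), ← h]
  gcongr with a
  exact lintegral_min_prod_coulomb_colorClass_le hI a M

lemma absMoment_ne_top_of_splitSum (hν : IsSelfSimilar ν) (hI : 1 < #I)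
    (he : 0 < (eexp I s).re) (hsplit : splitSum p (absMoment ν s) I ≠ ⊤) :
    absMoment ν s I ≠ ⊤ := by
  have hI' : I.Nonempty := card_pos.1 (by omega)
  set u : ENNReal := (p : ENNReal)⁻¹ ^ (#I - 1)
  set r : ENNReal := max u ‖(p : ℂ) ^ (-eexp I s)‖ₑ
  have hu1 : u < 1 := pow_lt_one₀ zero_le
    (ENNReal.inv_lt_one.2 (mod_cast (Fact.out : p.Prime).one_lt)) (by omega)
  have hr1 : r < 1 := max_lt hu1 (enorm_cpow_neg_lt_one_iff.2 he)
  have hbound : ∫⁻ x, ‖coulomb s I x‖ₑ ∂Measure.pi (fun _ => ν) ≤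
      u * splitSum p (absMoment ν s) I / (1 - r) := by
    refine lintegral_le_of_forall_lintegral_min_le measurable_coulomb.enorm fun n => ?_
    have hfin : ∫⁻ x, min ‖coulomb s I x‖ₑ n ∂Measure.pi (fun _ => ν) ≠ ⊤ :=
      ((lintegral_mono fun x => min_le_right _ _).trans_lt (by simp)).ne
    refine le_div_of_le_mul_add hfin hr1 ((hν.lintegral_min_coulomb_le hI' n).trans_eq ?_)
    rw [truncMoment, Function.update_self, mul_add, ← mul_assoc, mul_max, mul_one,
      ← enorm_cpow_neg_eexp hI']
  rw [← integrable_coulomb_iff]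
  refine ⟨measurable_coulomb.aestronglyMeasurable, hbound.trans_lt ?_⟩
  exact ENNReal.div_lt_top (ENNReal.mul_ne_top hu1.ne_top hsplit) (tsub_pos_of_lt hr1).ne'

lemma absMoment_ne_top (hν : IsSelfSimilar ν) (h : InOmega I s) : absMoment ν s I ≠ ⊤ := by
  induction I using Finset.strongInduction with
  | H I ih =>
    obtain hI | hI := le_or_gt #I 1
    · rw [absMoment_of_card_le_one hI]
      exact ENNReal.one_ne_top
    · refine hν.absMoment_ne_top_of_splitSum hI (h I subset_rfl hI) <|
        ENNReal.sum_ne_top.2 fun P hP => ENNReal.mul_ne_top (ENNReal.natCast_ne_top _) <|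
          ENNReal.prod_ne_top fun B hB => ?_
      have hBI := ssubset_of_mem_parts (mem_erase.1 hP).1 hB
      exact ih B hBI fun C hC => h C (hC.trans hBI.subset)

lemma integrable_coulomb_iff_inOmega (hν : IsSelfSimilar ν) :
    Integrable (coulomb s I) (Measure.pi fun _ => ν) ↔ InOmega I s :=
  integrable_coulomb_iff.trans
    ⟨fun h _ hJI hJ => hν.eexp_re_pos hJ (hν.absMoment_ne_top_of_subset hJI h),
      hν.absMoment_ne_top⟩

lemma moment_eq_mul_add (hν : IsSelfSimilar ν) (hI : I.Nonempty) (h : InOmega I s) :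
    moment ν s I = (p : ℂ) ^ (-eexp I s) * (moment ν s I + splitSum p (moment ν s) I) := by
  have hsum := pow_mul_sum_prod_colorClass (κ := Fin p) (u := (p : ℂ)⁻¹)
    (by simp [(Fact.out : p.Prime).ne_zero]) hI
    (moment_of_card_le_one (p := p) (ν := ν) (s := s) (I := ∅) (by simp))
  rw [Fintype.card_fin, Fintype.card_fin,
    ← hν.integral_coulomb (hν.integrable_coulomb_iff_inOmega.2 h)] at hsum
  conv_lhs => rw [moment_eq_mul, hsum]
  rw [cpow_neg_eexp hI]
  ring

lemma moment_eq_splitSum_div (hν : IsSelfSimilar ν) (hI : 1 < #I) (h : InOmega I s) :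
    moment ν s I = splitSum p (moment ν s) I / ((p : ℂ) ^ eexp I s - 1) := by
  have hp : (p : ℂ) ≠ 0 := mod_cast (Fact.out : p.Prime).ne_zero
  have hpow : (p : ℂ) ^ eexp I s ≠ 0 := by simp [hp]
  have hne : (p : ℂ) ^ eexp I s - 1 ≠ 0 := by
    refine sub_ne_zero.2 fun h1 => ?_
    have hlt := (enorm_cpow_neg_lt_one_iff (p := p)).2 (h I subset_rfl hI)
    rw [Complex.cpow_neg, h1, inv_one, enorm_one] at hlt
    exact lt_irrefl _ hlt
  have hrec := hν.moment_eq_mul_add (card_pos.1 (by omega)) h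
  rw [Complex.cpow_neg, eq_inv_mul_iff_mul_eq₀ hpow] at hrec
  rw [eq_div_iff hne, mul_sub, mul_one, mul_comm, hrec, add_sub_cancel_left]

lemma isSplittingRecursion_moment (hν : IsSelfSimilar ν) (h : InOmega univ s) :
    IsSplittingRecursion
      (fun B d => ((p - 1).descFactorial (d - 1) : ℂ) / ((p : ℂ) ^ eexp B s - 1))
      (moment ν s) where
  eq_one B hB := moment_of_card_le_one hB.le
  eq_sum B hB := by
    rw [hν.moment_eq_splitSum_div hB fun C _ => h C (subset_univ C), splitSum, sum_div]
    exact sum_congr rfl fun T _ => mul_div_right_comm _ _ _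

end IsSelfSimilar

end Finiteness

theorem statement_10 (p : ℕ) [Fact p.Prime] (N : ℕ) (hN : 2 ≤ N)
    (μ : Measure ℚ_[p]) [SigmaFinite μ] [μ.IsAddHaarMeasure] (hμ : μ (Zball p) = 1)
    (s : Fin N → Fin N → ℂ) :
    (Integrable
        (fun x : Fin N → ℚ_[p] => ∏ q ∈ pairs N, (‖x q.1 - x q.2‖ : ℂ) ^ s q.1 q.2)
        (Measure.pi fun _ => μ.restrict (Zball p)) ↔ InOmega Finset.univ s) ∧
    (InOmega Finset.univ s →
      ZNs p μ (Zball p) N s =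
        (p : ℂ) ^ (∑ q ∈ pairs N, s q.1 q.2) *
          ∑ᶠ S ∈ {S : SplChain N (Finset.univ : Finset (Fin N)) | S.Reduced},
            ∏ lam ∈ S.branches,
              ((p - 1).descFactorial (S.degree lam - 1) : ℂ) /
                ((p : ℂ) ^ eexp lam s - 1)) := by
  have : IsProbabilityMeasure (μ.restrict (Zball p)) := ⟨by rw [Measure.restrict_apply_univ, hμ]⟩
  have hν : IsSelfSimilar (μ.restrict (Zball p)) := isSelfSimilar_restrict_zball
  have huniv : (univ : Finset (Fin N)).Nonempty := ⟨⟨0, by omega⟩, mem_univ _⟩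
  have hp : (p : ℂ) ≠ 0 := mod_cast (Fact.out : p.Prime).ne_zero
  rw [← coulomb_univ]
  refine ⟨hν.integrable_coulomb_iff_inOmega, fun h => ?_⟩
  rw [(hν.isSplittingRecursion_moment h).finsum_reduced huniv, moment_eq_mul, exponentSum,
    pairsIn_univ, ← mul_assoc, ← Complex.cpow_add _ _ hp, add_neg_cancel, Complex.cpow_zero,
    one_mul, coulomb_univ, ZNs]

end LogCoulomb
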